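/- Let d ≥ 3, and let u be a finite-energy free wave on ℝ^d with initial data in Ḣ¹ × L². Then lim_{η→+∞} sup_{t>η} ∫_{|x|<t-η} ( |∇u(x,t)|² + |u_t(x,t)|² ) dx = 0. -/

import Mathlib

open MeasureTheory Real Filter

namespace FreeWave

open scoped ENNReal NNReal

/-- The Euclidean space `ℝ^d`. -/
abbrev Space (d : ℕ) := EuclideanSpace ℝ (Fin d)

variable {d : ℕ}

/-- The `i`-th standard basis vector of `ℝ^d`. -/
noncomputable abbrev basisVec (i : Fin d) : Space d := EuclideanSpace.single i 1

/-- The quadratic form `|ξ|² + τ²` of a spacetime covector `ℓ = (ξ, τ)`. -/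
noncomputable def covectorEnergy (ℓ : Space d × ℝ →L[ℝ] ℝ) : ℝ :=
  ‖ℓ.comp (ContinuousLinearMap.inl ℝ (Space d) ℝ)‖ ^ 2 + (ℓ (0, 1)) ^ 2

/-- The energy of `U` at time `t`. -/
noncomputable def energy (U : Space d × ℝ → ℝ) (t : ℝ) : ℝ≥0∞ :=
  ∫⁻ x, ENNReal.ofReal (covectorEnergy (fderiv ℝ U (x, t)))

/-- The squared `L²` norm of `U` at time `t`. -/
noncomputable def mass (U : Space d × ℝ → ℝ) (t : ℝ) : ℝ≥0∞ :=
  ∫⁻ x, ENNReal.ofReal (U (x, t) ^ 2)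

/-- Classical solutions of the free wave equation on `ℝ^d × ℝ`. -/
structure IsFreeWave (U : Space d × ℝ → ℝ) : Prop where
  contDiff : ContDiff ℝ 2 U
  wave_eq : ∀ z, fderiv ℝ (fderiv ℝ U) z (0, 1) (0, 1) =
    ∑ i : Fin d, fderiv ℝ (fderiv ℝ U) z (basisVec i, 0) (basisVec i, 0)

/-! ### The energy form -/

lemma covectorEnergy_nonneg (ℓ : Space d × ℝ →L[ℝ] ℝ) : 0 ≤ covectorEnergy ℓ := by
  unfold covectorEnergy; positivity

lemma continuous_covectorEnergy : Continuous (covectorEnergy (d := d)) := by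
  unfold covectorEnergy; fun_prop

lemma convexOn_covectorEnergy : ConvexOn ℝ Set.univ (covectorEnergy (d := d)) := by
  have h1 : ConvexOn ℝ Set.univ fun ξ : Space d →L[ℝ] ℝ => ‖ξ‖ ^ 2 :=
    convexOn_univ_norm.pow (fun _ _ => norm_nonneg _) 2
  have h2 : ConvexOn ℝ Set.univ fun τ : ℝ => τ ^ 2 := even_two.convexOn_pow
  have h3 := h1.comp_linearMap
    ((ContinuousLinearMap.compL ℝ (Space d) (Space d × ℝ) ℝ).flip
      (ContinuousLinearMap.inl ℝ (Space d) ℝ)).toLinearMap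
  have h4 := h2.comp_linearMap
    (ContinuousLinearMap.apply ℝ ℝ ((0, 1) : Space d × ℝ)).toLinearMap
  exact h3.add h4

lemma covectorEnergy_smul (c : ℝ) (ℓ : Space d × ℝ →L[ℝ] ℝ) :
    covectorEnergy (c • ℓ) = c ^ 2 * covectorEnergy ℓ := by
  simp only [covectorEnergy, ContinuousLinearMap.smul_comp, norm_smul, mul_pow,
    smul_apply, smul_eq_mul, norm_eq_abs, sq_abs]
  ring

lemma sq_add_le_weighted {κ : ℝ} (hκ : 0 < κ) (a b : ℝ) :
    (a + b) ^ 2 ≤ (1 + κ) * a ^ 2 + (1 + κ⁻¹) * b ^ 2 := by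
  have h : (1 + κ) * a ^ 2 + (1 + κ⁻¹) * b ^ 2 - (a + b) ^ 2 = κ * (a - κ⁻¹ * b) ^ 2 := by
    field_simp; ring
  have : 0 ≤ κ * (a - κ⁻¹ * b) ^ 2 := by positivity
  linarith

lemma covectorEnergy_add_le {κ : ℝ} (hκ : 0 < κ) (ℓ m : Space d × ℝ →L[ℝ] ℝ) :
    covectorEnergy (ℓ + m) ≤ (1 + κ) * covectorEnergy ℓ + (1 + κ⁻¹) * covectorEnergy m := by
  unfold covectorEnergy
  have h1 := sq_add_le_weighted hκ ‖ℓ.comp (ContinuousLinearMap.inl ℝ (Space d) ℝ)‖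
    ‖m.comp (ContinuousLinearMap.inl ℝ (Space d) ℝ)‖
  have h2 := sq_add_le_weighted hκ (ℓ (0, 1)) (m (0, 1))
  have h3 : ‖(ℓ + m).comp (ContinuousLinearMap.inl ℝ (Space d) ℝ)‖ ^ 2 ≤
      (‖ℓ.comp (ContinuousLinearMap.inl ℝ (Space d) ℝ)‖ +
        ‖m.comp (ContinuousLinearMap.inl ℝ (Space d) ℝ)‖) ^ 2 := by
    rw [ContinuousLinearMap.add_comp]
    gcongr
    exact norm_add_le _ _
  simp only [add_apply] at *
  linarith

lemma covectorEnergy_add_le_two (ℓ m : Space d × ℝ →L[ℝ] ℝ) :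
    covectorEnergy (ℓ + m) ≤ 2 * covectorEnergy ℓ + 2 * covectorEnergy m := by
  have := covectorEnergy_add_le one_pos ℓ m
  norm_num at this
  exact this

lemma norm_sq_eq_sum (ξ : Space d →L[ℝ] ℝ) : ‖ξ‖ ^ 2 = ∑ i, ξ (basisVec i) ^ 2 := by
  have h := (EuclideanSpace.basisFun (Fin d) ℝ).sum_sq_norm_inner_right
    ((InnerProductSpace.toDual ℝ (Space d)).symm ξ)
  rw [LinearIsometryEquiv.norm_map] at h
  rw [← h]
  refine Finset.sum_congr rfl fun i _ => ?_
  rw [real_inner_comm, InnerProductSpace.toDual_symm_apply]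
  simp

lemma covectorEnergy_eq_sum (ℓ : Space d × ℝ →L[ℝ] ℝ) :
    covectorEnergy ℓ = ∑ i, ℓ (basisVec i, 0) ^ 2 + ℓ (0, 1) ^ 2 := by
  rw [covectorEnergy, norm_sq_eq_sum]
  simp

lemma sq_apply_space_le (ℓ : Space d × ℝ →L[ℝ] ℝ) (x : Space d) :
    ℓ (x, 0) ^ 2 ≤ ‖x‖ ^ 2 * ∑ i, ℓ (basisVec i, 0) ^ 2 := by
  have h := (ℓ.comp (ContinuousLinearMap.inl ℝ (Space d) ℝ)).le_opNorm x
  have h2 := pow_le_pow_left₀ (norm_nonneg _) h 2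
  rw [mul_pow, norm_sq_eq_sum] at h2
  simpa [mul_comm] using h2

lemma sum_coord_mul_apply (ξ : Space d →L[ℝ] ℝ) (x : Space d) :
    ∑ i, x i * ξ (basisVec i) = ξ x := by
  conv_rhs => rw [← (EuclideanSpace.basisFun (Fin d) ℝ).sum_repr x]
  simp [map_sum]

/-! ### Operations on free waves -/

section
variable {U V : Space d × ℝ → ℝ}

lemma IsFreeWave.differentiable (hU : IsFreeWave U) : Differentiable ℝ U :=
  hU.contDiff.differentiable (by norm_num)

lemma IsFreeWave.contDiff_fderiv (hU : IsFreeWave U) : ContDiff ℝ 1 (fderiv ℝ U) :=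
  hU.contDiff.fderiv_right (by norm_num)

lemma IsFreeWave.differentiable_fderiv (hU : IsFreeWave U) : Differentiable ℝ (fderiv ℝ U) :=
  hU.contDiff_fderiv.differentiable (by norm_num)

lemma IsFreeWave.continuous_fderiv (hU : IsFreeWave U) : Continuous (fderiv ℝ U) :=
  hU.contDiff_fderiv.continuous

lemma IsFreeWave.fderiv_add (hU : IsFreeWave U) (hV : IsFreeWave V) :
    fderiv ℝ (U + V) = fderiv ℝ U + fderiv ℝ V :=
  funext fun z => _root_.fderiv_add (hU.differentiable z) (hV.differentiable z)

lemma IsFreeWave.add (hU : IsFreeWave U) (hV : IsFreeWave V) : IsFreeWave (U + V) where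
  contDiff := hU.contDiff.add hV.contDiff
  wave_eq z := by
    rw [hU.fderiv_add hV, _root_.fderiv_add (hU.differentiable_fderiv z)
      (hV.differentiable_fderiv z)]
    simp only [add_apply, hU.wave_eq, hV.wave_eq, Finset.sum_add_distrib]

lemma fderiv_const_smul_fun (U : Space d × ℝ → ℝ) (c : ℝ) :
    fderiv ℝ (c • U) = c • fderiv ℝ U :=
  fderiv_const_smul_field c

lemma IsFreeWave.const_smul (hU : IsFreeWave U) (c : ℝ) : IsFreeWave (c • U) where
  contDiff := hU.contDiff.const_smul c
  wave_eq z := by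
    rw [fderiv_const_smul_fun, fderiv_const_smul (hU.differentiable_fderiv z)]
    simp only [smul_apply, hU.wave_eq, Finset.smul_sum]

lemma IsFreeWave.sub (hU : IsFreeWave U) (hV : IsFreeWave V) : IsFreeWave (U - V) := by
  have := hU.add (hV.const_smul (-1))
  rwa [neg_one_smul, ← sub_eq_add_neg] at this

lemma IsFreeWave.fderiv_sub (hU : IsFreeWave U) (hV : IsFreeWave V) :
    fderiv ℝ (U - V) = fderiv ℝ U - fderiv ℝ V :=
  funext fun z => _root_.fderiv_sub (hU.differentiable z) (hV.differentiable z)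

lemma IsFreeWave.comp_add_right (hU : IsFreeWave U) (c : Space d × ℝ) :
    IsFreeWave fun z => U (z + c) where
  contDiff := hU.contDiff.comp (contDiff_id.add contDiff_const)
  wave_eq z := by
    have h : fderiv ℝ (fun z => U (z + c)) = fun z => fderiv ℝ U (z + c) :=
      funext fun z => fderiv_comp_add_right c
    rw [h, fderiv_comp_add_right]
    exact hU.wave_eq _

/-- Two functions which differ by a wave of energy at most `ε` have comparable local energies. -/
lemma setLIntegral_energy_le (hU : IsFreeWave U) (hV : IsFreeWave V) (s : Set (Space d)) (t : ℝ) :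
    ∫⁻ x in s, ENNReal.ofReal (covectorEnergy (fderiv ℝ U (x, t))) ≤
      2 * (∫⁻ x in s, ENNReal.ofReal (covectorEnergy (fderiv ℝ V (x, t)))) +
        2 * energy (U - V) t := by
  have hVm : Measurable fun x => ENNReal.ofReal (covectorEnergy (fderiv ℝ V (x, t))) :=
    (ENNReal.continuous_ofReal.comp (continuous_covectorEnergy.comp
      (hV.continuous_fderiv.comp (by fun_prop)))).measurable
  calc
    _ ≤ ∫⁻ x in s, (2 * ENNReal.ofReal (covectorEnergy (fderiv ℝ V (x, t))) +
          2 * ENNReal.ofReal (covectorEnergy (fderiv ℝ (U - V) (x, t)))) := by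
      refine lintegral_mono fun x => ?_
      have h := covectorEnergy_add_le_two (fderiv ℝ V (x, t)) (fderiv ℝ (U - V) (x, t))
      have h2 : fderiv ℝ V (x, t) + fderiv ℝ (U - V) (x, t) = fderiv ℝ U (x, t) := by
        rw [hU.fderiv_sub hV]; simp
      rw [h2] at h
      refine (ENNReal.ofReal_le_ofReal h).trans ?_
      rw [ENNReal.ofReal_add (by have := covectorEnergy_nonneg (fderiv ℝ V (x, t)); positivity)
        (by have := covectorEnergy_nonneg (fderiv ℝ (U - V) (x, t)); positivity),
        ENNReal.ofReal_mul zero_le_two, ENNReal.ofReal_mul zero_le_two, ENNReal.ofReal_ofNat]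
    _ ≤ _ := by
      rw [lintegral_add_left (hVm.const_mul 2), lintegral_const_mul' _ _ ENNReal.ofNat_ne_top,
        lintegral_const_mul' _ _ ENNReal.ofNat_ne_top]
      gcongr
      exact setLIntegral_le_lintegral _ _

lemma energy_le_of_sub (hU : IsFreeWave U) (hV : IsFreeWave V) (t : ℝ) :
    energy U t ≤ 2 * energy V t + 2 * energy (U - V) t := by
  simpa [energy] using setLIntegral_energy_le hU hV Set.univ t

lemma energy_const_smul (U : Space d × ℝ → ℝ) (c t : ℝ) :
    energy (c • U) t = ENNReal.ofReal (c ^ 2) * energy U t := by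
  simp only [energy, fderiv_const_smul_fun, Pi.smul_apply, covectorEnergy_smul]
  rw [← lintegral_const_mul' _ _ ENNReal.ofReal_ne_top]
  simp only [ENNReal.ofReal_mul (sq_nonneg c)]

lemma energy_add_le (hU : IsFreeWave U) (hV : IsFreeWave V) (t : ℝ) :
    energy (U + V) t ≤ 2 * energy V t + 2 * energy U t := by
  have := energy_le_of_sub (hU.add hV) hV t
  rwa [add_sub_cancel_right] at this

lemma energy_sub_le (hU : IsFreeWave U) (hV : IsFreeWave V) (t : ℝ) :
    energy (U - V) t ≤ 2 * energy V t + 2 * energy U t := by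
  have := energy_add_le hU (hV.const_smul (-1)) t
  rw [energy_const_smul] at this
  rw [neg_one_smul, ← sub_eq_add_neg] at this
  simpa using this

lemma mass_add_le (hU : Continuous U) (V : Space d × ℝ → ℝ) (t : ℝ) :
    mass (U + V) t ≤ 2 * mass U t + 2 * mass V t := by
  have hUm : Measurable fun x => ENNReal.ofReal (U (x, t) ^ 2) :=
    (ENNReal.continuous_ofReal.comp ((hU.comp (by fun_prop)).pow 2)).measurable
  unfold mass
  rw [← lintegral_const_mul' _ _ ENNReal.ofNat_ne_top,
    ← lintegral_const_mul' _ _ ENNReal.ofNat_ne_top, ← lintegral_add_left (hUm.const_mul 2)]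
  refine lintegral_mono fun x => ?_
  rw [← ENNReal.ofReal_ofNat, ← ENNReal.ofReal_mul zero_le_two, ← ENNReal.ofReal_mul zero_le_two,
    ← ENNReal.ofReal_add (by positivity) (by positivity)]
  refine ENNReal.ofReal_le_ofReal ?_
  simp only [Pi.add_apply]
  nlinarith [sq_nonneg (U (x, t) - V (x, t))]

lemma mass_const_smul (U : Space d × ℝ → ℝ) (c t : ℝ) :
    mass (c • U) t = ENNReal.ofReal (c ^ 2) * mass U t := by
  simp only [mass, Pi.smul_apply, smul_eq_mul, mul_pow]
  rw [← lintegral_const_mul' _ _ ENNReal.ofReal_ne_top]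
  simp only [ENNReal.ofReal_mul (sq_nonneg c)]

lemma mass_sub_le (hU : Continuous U) (V : Space d × ℝ → ℝ) (t : ℝ) :
    mass (U - V) t ≤ 2 * mass U t + 2 * mass V t := by
  have := mass_add_le hU (-1 • V) t
  rw [neg_one_zsmul, ← sub_eq_add_neg] at this
  simpa [mass] using this

lemma energy_comp_add_right (U : Space d × ℝ → ℝ) (a : Space d) (t : ℝ) :
    energy (fun z => U (z + (a, 0))) t = energy U t := by
  simp only [energy, fderiv_comp_add_right, Prod.mk_add_mk, add_zero]
  exact lintegral_add_right_eq_self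
    (fun x => ENNReal.ofReal (covectorEnergy (fderiv ℝ U (x, t)))) a

end

/-! ### Radial cutoffs and the divergence theorem -/

lemma deriv_smoothTransition_of_nonpos {q : ℝ} (hq : q ≤ 0) : deriv smoothTransition q = 0 := by
  refine IsLocalMin.deriv_eq_zero (Eventually.of_forall fun y => ?_)
  rw [smoothTransition.zero_of_nonpos hq]
  exact smoothTransition.nonneg y

lemma deriv_smoothTransition_of_one_le {q : ℝ} (hq : 1 ≤ q) : deriv smoothTransition q = 0 := by
  refine IsLocalMax.deriv_eq_zero (Eventually.of_forall fun y => ?_)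
  rw [smoothTransition.one_of_one_le hq]
  exact smoothTransition.le_one y

lemma exists_deriv_smoothTransition_le :
    ∃ C : ℝ, 0 ≤ C ∧ ∀ q, |deriv smoothTransition q| ≤ C := by
  have hc : Continuous (deriv smoothTransition) :=
    (smoothTransition.contDiff (n := 1)).continuous_deriv (by norm_num)
  obtain ⟨C, hC⟩ := (isCompact_Icc (a := (0 : ℝ)) (b := 1)).exists_bound_of_continuousOn
    hc.continuousOn
  have hC0 : 0 ≤ C := (norm_nonneg _).trans (hC 0 (by simp))
  refine ⟨C, hC0, fun q => ?_⟩
  by_cases h0 : q ≤ 0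
  · simpa [deriv_smoothTransition_of_nonpos h0] using hC0
  by_cases h1 : 1 ≤ q
  · simpa [deriv_smoothTransition_of_one_le h1] using hC0
  exact hC q ⟨(not_le.1 h0).le, (not_le.1 h1).le⟩

/-- A smooth radial function, equal to `1` where `b|x|² ≤ a - 1` and to `0` where `a ≤ b|x|²`. -/
noncomputable def radialCutoff (a b : ℝ) (x : Space d) : ℝ := smoothTransition (a - b * ‖x‖ ^ 2)

lemma contDiff_radialCutoff (a b : ℝ) : ContDiff ℝ 1 (radialCutoff (d := d) a b) :=
  (smoothTransition.contDiff (n := 1)).comp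
    (contDiff_const.sub (contDiff_const.mul (contDiff_norm_sq ℝ)))

lemma hasCompactSupport_radialCutoff (a : ℝ) {b : ℝ} (hb : 0 < b) :
    HasCompactSupport (radialCutoff (d := d) a b) := by
  refine HasCompactSupport.intro (isCompact_closedBall (0 : Space d) (√(a / b))) fun x hx => ?_
  refine smoothTransition.zero_of_nonpos ?_
  rw [mem_closedBall_zero_iff, not_le] at hx
  have h1 := Real.lt_sq_of_sqrt_lt hx
  rw [div_lt_iff₀ hb] at h1
  linarith

lemma fderiv_radialCutoff_apply (a b : ℝ) (x v : Space d) :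
    fderiv ℝ (radialCutoff a b) x v =
      deriv smoothTransition (a - b * ‖x‖ ^ 2) * (-(2 * b * inner ℝ x v)) := by
  have h1 : HasFDerivAt (fun x : Space d => a - b * ‖x‖ ^ 2)
      (-(b • (2 • innerSL ℝ x))) x :=
    ((hasStrictFDerivAt_norm_sq x).hasFDerivAt.const_mul b).const_sub a
  have h2 : HasDerivAt smoothTransition (deriv smoothTransition (a - b * ‖x‖ ^ 2))
      (a - b * ‖x‖ ^ 2) :=
    ((smoothTransition.contDiff (n := 1)).differentiable (by norm_num) _).hasDerivAt
  have h3 : HasFDerivAt (radialCutoff a b) _ x := h2.comp_hasFDerivAt x h1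
  rw [h3.fderiv]
  simp only [smul_apply, neg_apply, innerSL_apply_apply, smul_eq_mul, nsmul_eq_mul, Nat.cast_ofNat]
  ring

lemma sum_integral_fderiv_eq_zero {W : Fin d → Space d → ℝ} (hW : ∀ i, ContDiff ℝ 1 (W i))
    (hc : ∀ i, HasCompactSupport (W i)) :
    ∫ x, ∑ i, fderiv ℝ (W i) x (basisVec i) = 0 := by
  have hint : ∀ i, Integrable fun x => fderiv ℝ (W i) x (basisVec i) := fun i =>
    (((hW i).continuous_fderiv (by norm_num)).clm_apply
      continuous_const).integrable_of_hasCompactSupport ((hc i).fderiv_apply ℝ _)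
  rw [integral_finsetSum _ fun i _ => hint i]
  refine Finset.sum_eq_zero fun i _ => ?_
  have h := integral_mul_fderiv_eq_neg_fderiv_mul_of_integrable (μ := volume) (f := W i)
    (g := fun _ => (1 : ℝ)) (v := basisVec i) (by simpa using hint i) (by simp)
    (by simpa using (hW i).continuous.integrable_of_hasCompactSupport (hc i))
    (fun x _ => (hW i).differentiable (by norm_num) x) (fun x _ => by fun_prop)
  simpa using h.symm

/-! ### Conservation of energy -/

section
variable {U : Space d × ℝ → ℝ}

lemma hasFDerivAt_slice {G : Type*} [NormedAddCommGroup G] [NormedSpace ℝ G]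
    {F : Space d × ℝ → G} (hF : Differentiable ℝ F) (x : Space d) (t : ℝ) :
    HasFDerivAt (fun x => F (x, t))
      ((fderiv ℝ F (x, t)).comp (ContinuousLinearMap.inl ℝ (Space d) ℝ)) x :=
  (hF (x, t)).hasFDerivAt.comp x (hasFDerivAt_prodMk_left x t)

lemma hasDerivAt_time {G : Type*} [NormedAddCommGroup G] [NormedSpace ℝ G]
    {F : Space d × ℝ → G} (hF : Differentiable ℝ F) (x : Space d) (t : ℝ) :
    HasDerivAt (fun t => F (x, t)) (fderiv ℝ F (x, t) (0, 1)) t := by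
  have := (hF (x, t)).hasFDerivAt.comp_hasDerivAt t
    ((hasDerivAt_const t x).prodMk (hasDerivAt_id t))
  exact this

lemma hasDerivAt_fderiv_time (hU : Differentiable ℝ (fderiv ℝ U)) (x : Space d) (t : ℝ)
    (w : Space d × ℝ) : HasDerivAt (fun t => fderiv ℝ U (x, t) w)
      (fderiv ℝ (fderiv ℝ U) (x, t) (0, 1) w) t :=
  (ContinuousLinearMap.apply ℝ ℝ w).hasFDerivAt.comp_hasDerivAt t
    (hasDerivAt_time hU x t)

lemma hasFDerivAt_fderiv_slice (hU : Differentiable ℝ (fderiv ℝ U)) (x : Space d) (t : ℝ)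
    (w : Space d × ℝ) : HasFDerivAt (fun x => fderiv ℝ U (x, t) w)
      (((fderiv ℝ (fderiv ℝ U) (x, t)).comp (ContinuousLinearMap.inl ℝ (Space d) ℝ)).flip w) x :=
  ((ContinuousLinearMap.apply ℝ ℝ w).hasFDerivAt.comp x
    (hasFDerivAt_slice hU x t) : _)

lemma IsFreeWave.snd_fderiv_symm (hU : IsFreeWave U) (z v w : Space d × ℝ) :
    fderiv ℝ (fderiv ℝ U) z v w = fderiv ℝ (fderiv ℝ U) z w v :=
  (hU.contDiff.contDiffAt.isSymmSndFDerivAt (by simp)) v w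

/-- The time derivative of the energy density, as the divergence of `2 U_t ∇U`. -/
lemma IsFreeWave.hasDerivAt_covectorEnergy (hU : IsFreeWave U) (x : Space d) (t : ℝ) :
    HasDerivAt (fun t => covectorEnergy (fderiv ℝ U (x, t)))
      (∑ i, fderiv ℝ (fun x => 2 * (fderiv ℝ U (x, t) (0, 1) * fderiv ℝ U (x, t) (basisVec i, 0)))
        x (basisVec i)) t := by
  simp only [covectorEnergy_eq_sum]
  have h := (HasDerivAt.fun_sum (u := Finset.univ) fun i _ =>
    (hasDerivAt_fderiv_time hU.differentiable_fderiv x t (basisVec i, 0)).pow 2).add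
    ((hasDerivAt_fderiv_time hU.differentiable_fderiv x t (0, 1)).pow 2)
  refine h.congr_deriv ?_
  rw [hU.wave_eq, Finset.mul_sum, ← Finset.sum_add_distrib]
  refine Finset.sum_congr rfl fun i _ => ?_
  have h2 := ((hasFDerivAt_fderiv_slice hU.differentiable_fderiv x t (0, 1)).fun_mul
    (hasFDerivAt_fderiv_slice hU.differentiable_fderiv x t (basisVec i, 0))).const_mul 2
  rw [h2.fderiv]
  simp [hU.snd_fderiv_symm _ (0, 1) (basisVec i, 0)]
  ring

end

section
variable {U : Space d × ℝ → ℝ}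

lemma contDiff_covectorEnergy : ContDiff ℝ 1 (covectorEnergy (d := d)) := by
  have h : covectorEnergy (d := d) =
      fun ℓ => ∑ i, ℓ (basisVec i, 0) ^ 2 + ℓ (0, 1) ^ 2 := funext covectorEnergy_eq_sum
  rw [h]
  fun_prop

lemma hasDerivAt_integral_cutoff {χ : Space d → ℝ} (hχ : Continuous χ) (hc : HasCompactSupport χ)
    {F : Space d × ℝ → ℝ} (hF : ContDiff ℝ 1 F) (t : ℝ) :
    HasDerivAt (fun t => ∫ x, χ x * F (x, t)) (∫ x, χ x * fderiv ℝ F (x, t) (0, 1)) t := by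
  have hF' : Continuous fun z => fderiv ℝ F z (0, 1) :=
    (hF.continuous_fderiv (by norm_num)).clm_apply continuous_const
  have hcont : ∀ s, Continuous fun x => χ x * F (x, s) := fun s =>
    hχ.mul (hF.continuous.comp (by fun_prop))
  have hcont' : ∀ s, Continuous fun x => χ x * fderiv ℝ F (x, s) (0, 1) := fun s =>
    hχ.mul (hF'.comp (by fun_prop))
  obtain ⟨C, hC⟩ := (hc.isCompact.prod (isCompact_closedBall t 1)).exists_bound_of_continuousOn
    (f := fun z : Space d × ℝ => χ z.1 * fderiv ℝ F z (0, 1))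
    ((hχ.comp continuous_fst).mul hF').continuousOn
  refine (hasDerivAt_integral_of_dominated_loc_of_deriv_le
    (F' := fun s x => χ x * fderiv ℝ F (x, s) (0, 1))
    (bound := (tsupport χ).indicator fun _ => C) (Metric.closedBall_mem_nhds t one_pos)
    (Eventually.of_forall fun s => (hcont s).aestronglyMeasurable)
    ((hcont t).integrable_of_hasCompactSupport hc.mul_right)
    (hcont' t).aestronglyMeasurable
    (Eventually.of_forall fun x s hs => ?_)
    ((integrable_indicator_iff hc.isCompact.measurableSet).2
      (integrableOn_const hc.isCompact.measure_ne_top))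
    (Eventually.of_forall fun x s _ => ?_)).2
  · by_cases hx : x ∈ tsupport χ
    · rw [Set.indicator_of_mem hx]
      exact hC (x, s) ⟨hx, hs⟩
    · rw [Set.indicator_of_notMem hx, image_eq_zero_of_notMem_tsupport hx]
      simp
  · exact (hasDerivAt_time (hF.differentiable (by norm_num)) x s).const_mul (χ x)

lemma toReal_energy (hU : IsFreeWave U) (t : ℝ) :
    ∫ x, covectorEnergy (fderiv ℝ U (x, t)) = (energy U t).toReal := by
  rw [integral_eq_lintegral_of_nonneg_ae (Eventually.of_forall fun x => covectorEnergy_nonneg _)]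
  · rfl
  · exact (continuous_covectorEnergy.comp
      (hU.continuous_fderiv.comp (by fun_prop))).aestronglyMeasurable

lemma IsFreeWave.integrable_covectorEnergy (hU : IsFreeWave U) {t : ℝ} (ht : energy U t ≠ ∞) :
    Integrable fun x => covectorEnergy (fderiv ℝ U (x, t)) := by
  refine ⟨(continuous_covectorEnergy.comp
      (hU.continuous_fderiv.comp (by fun_prop))).aestronglyMeasurable, ?_⟩
  rw [hasFiniteIntegral_iff_ofReal (Eventually.of_forall fun x => covectorEnergy_nonneg _)]
  exact lt_top_iff_ne_top.2 ht

/-- The energy flux through the transition region of a cutoff at scale `R` is `O(1 / R)`. -/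
lemma IsFreeWave.abs_deriv_cutoff_energy_le (hU : IsFreeWave U) {C R : ℝ} (hR : 0 < R)
    (hC : ∀ q, |deriv smoothTransition q| ≤ C) {t : ℝ} (ht : energy U t ≠ ∞) :
    |∫ x, radialCutoff 2 (R ^ 2)⁻¹ x *
      fderiv ℝ (fun z => covectorEnergy (fderiv ℝ U z)) (x, t) (0, 1)| ≤
      4 * C / R * (energy U t).toReal := by
  have hC0 : 0 ≤ C := (abs_nonneg _).trans (hC 0)
  set χ : Space d → ℝ := radialCutoff 2 (R ^ 2)⁻¹ with hχdef
  have hχ : ContDiff ℝ 1 χ := contDiff_radialCutoff _ _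
  have hχc : HasCompactSupport χ := hasCompactSupport_radialCutoff _ (by positivity)
  set G : Fin d → Space d → ℝ := fun i x =>
    2 * (fderiv ℝ U (x, t) (0, 1) * fderiv ℝ U (x, t) (basisVec i, 0)) with hG
  have hDs : ContDiff ℝ 1 fun x => fderiv ℝ U (x, t) :=
    hU.contDiff_fderiv.comp (contDiff_id.prodMk contDiff_const)
  have hGs : ∀ i, ContDiff ℝ 1 (G i) := fun i =>
    contDiff_const.mul ((hDs.clm_apply contDiff_const).mul (hDs.clm_apply contDiff_const))
  have hdiv := sum_integral_fderiv_eq_zero (W := fun i x => χ x * G i x) (fun i => hχ.mul (hGs i))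
    (fun i => hχc.mul_right)
  have hpoint : ∀ x, ∑ i, fderiv ℝ (fun x => χ x * G i x) x (basisVec i) =
      χ x * fderiv ℝ (fun z => covectorEnergy (fderiv ℝ U z)) (x, t) (0, 1) +
        2 * fderiv ℝ U (x, t) (0, 1) *
          (deriv smoothTransition (2 - (R ^ 2)⁻¹ * ‖x‖ ^ 2) *
            (-(2 * (R ^ 2)⁻¹ * fderiv ℝ U (x, t) (x, 0)))) := by
    intro x
    have h1 := (hasDerivAt_time (F := fun z => covectorEnergy (fderiv ℝ U z))
      ((contDiff_covectorEnergy.comp hU.contDiff_fderiv).differentiable (by norm_num))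
      x t).unique (hU.hasDerivAt_covectorEnergy x t)
    have h2 := sum_coord_mul_apply
      ((fderiv ℝ U (x, t)).comp (ContinuousLinearMap.inl ℝ (Space d) ℝ)) x
    simp only [ContinuousLinearMap.comp_apply, ContinuousLinearMap.inl_apply] at h2
    rw [h1, ← h2, Finset.mul_sum, Finset.mul_sum, ← Finset.sum_neg_distrib, Finset.mul_sum,
      Finset.mul_sum, ← Finset.sum_add_distrib]
    refine Finset.sum_congr rfl fun i _ => ?_
    rw [fderiv_fun_mul (hχ.differentiable (by norm_num) x) ((hGs i).differentiable (by norm_num) x)]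
    simp only [add_apply, smul_apply, smul_eq_mul]
    rw [hχdef, fderiv_radialCutoff_apply, hG]
    simp [EuclideanSpace.inner_single_right]
    ring
  have hEs : Continuous fun x =>
      χ x * fderiv ℝ (fun z => covectorEnergy (fderiv ℝ U z)) (x, t) (0, 1) :=
    hχ.continuous.mul ((((contDiff_covectorEnergy.comp hU.contDiff_fderiv).continuous_fderiv
      (by norm_num)).comp (by fun_prop)).clm_apply continuous_const)
  have hEi : Integrable fun x =>
      χ x * fderiv ℝ (fun z => covectorEnergy (fderiv ℝ U z)) (x, t) (0, 1) :=
    hEs.integrable_of_hasCompactSupport hχc.mul_right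
  have hWi : Integrable fun x => ∑ i, fderiv ℝ (fun x => χ x * G i x) x (basisVec i) :=
    integrable_finsetSum _ fun i _ => (((hχ.mul (hGs i)).continuous_fderiv
      (by norm_num)).clm_apply continuous_const).integrable_of_hasCompactSupport
      (hχc.mul_right.fderiv_apply ℝ _)
  have heq : ∫ x, χ x * fderiv ℝ (fun z => covectorEnergy (fderiv ℝ U z)) (x, t) (0, 1) =
      ∫ x, (χ x * fderiv ℝ (fun z => covectorEnergy (fderiv ℝ U z)) (x, t) (0, 1) -
        ∑ i, fderiv ℝ (fun x => χ x * G i x) x (basisVec i)) := by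
    rw [integral_sub hEi hWi, hdiv, sub_zero]
  rw [heq, ← toReal_energy hU, ← integral_const_mul, ← Real.norm_eq_abs]
  refine norm_integral_le_of_norm_le ((hU.integrable_covectorEnergy ht).const_mul _)
    (Eventually.of_forall fun x => ?_)
  rw [hpoint, sub_add_cancel_left, norm_neg, Real.norm_eq_abs]
  set q := 2 - (R ^ 2)⁻¹ * ‖x‖ ^ 2 with hq
  by_cases h0 : q ≤ 0
  · rw [deriv_smoothTransition_of_nonpos h0]
    have := covectorEnergy_nonneg (fderiv ℝ U (x, t))
    simp only [zero_mul, mul_zero, abs_zero]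
    positivity
  · have hxR : ‖x‖ ^ 2 ≤ 2 * R ^ 2 := by
      have : (R ^ 2)⁻¹ * ‖x‖ ^ 2 < 2 := by linarith
      rw [inv_mul_lt_iff₀ (by positivity)] at this
      linarith
    have hx2 := sq_apply_space_le (fderiv ℝ U (x, t)) x
    rw [covectorEnergy_eq_sum]
    set S := ∑ i, fderiv ℝ U (x, t) (basisVec i, 0) ^ 2 with hS
    have hS0 : 0 ≤ S := Finset.sum_nonneg fun _ _ => sq_nonneg _
    set b := fderiv ℝ U (x, t) (0, 1)
    set a := fderiv ℝ U (x, t) (x, 0)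
    have ha2 : a ^ 2 ≤ 2 * R ^ 2 * S := hx2.trans (by gcongr)
    have hab : |b| * |a| ≤ R * (S + b ^ 2) := by
      refine abs_le_of_sq_le_sq' ?_ (by positivity) |>.2
      rw [mul_pow, sq_abs, sq_abs]
      nlinarith [mul_le_mul_of_nonneg_left ha2 (sq_nonneg b),
        mul_nonneg (sq_nonneg R) (sq_nonneg S), mul_nonneg (sq_nonneg R) (sq_nonneg (b ^ 2))]
    have hRi : (R ^ 2)⁻¹ * R = 1 / R := by field_simp
    calc |2 * b * (deriv smoothTransition q * -(2 * (R ^ 2)⁻¹ * a))|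
        = |deriv smoothTransition q| * (4 * (R ^ 2)⁻¹ * (|b| * |a|)) := by
          rw [abs_mul, abs_mul, abs_mul, abs_neg, abs_mul, abs_mul,
            abs_of_nonneg (by positivity : (0 : ℝ) ≤ (R ^ 2)⁻¹), abs_two]
          ring
      _ ≤ C * (4 * (R ^ 2)⁻¹ * (R * (S + b ^ 2))) := by
          gcongr
          exact hC q
      _ = 4 * C * ((R ^ 2)⁻¹ * R) * (S + b ^ 2) := by ring
      _ = 4 * C / R * (S + b ^ 2) := by rw [hRi]; ring

lemma tendsto_setLIntegral_ball (f : Space d → ℝ≥0∞) :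
    Tendsto (fun n : ℕ => ∫⁻ x in Metric.ball 0 ((n : ℝ) + 1), f x) atTop
      (nhds (∫⁻ x, f x)) := by
  have hmono : Monotone fun n : ℕ => Metric.ball (0 : Space d) ((n : ℝ) + 1) :=
    fun m n hmn => Metric.ball_subset_ball (by gcongr)
  have hu : ⋃ n : ℕ, Metric.ball (0 : Space d) ((n : ℝ) + 1) = Set.univ := by
    refine Set.eq_univ_of_forall fun x => Set.mem_iUnion.2 ?_
    obtain ⟨n, hn⟩ := exists_nat_gt ‖x‖
    exact ⟨n, by rw [mem_ball_zero_iff]; linarith⟩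
  rw [← setLIntegral_univ, ← hu, setLIntegral_iUnion_of_directed f hmono.directed_le]
  exact tendsto_atTop_iSup fun m n hmn => lintegral_mono_set (hmono hmn)

lemma exists_setLIntegral_compl_ball_le {f : Space d → ℝ≥0∞} (hf : ∫⁻ x, f x ≠ ∞) {ε : ℝ≥0∞}
    (hε : ε ≠ 0) : ∃ R : ℝ, 0 < R ∧ ∫⁻ x in (Metric.ball 0 R)ᶜ, f x ≤ ε := by
  by_cases h0 : ∫⁻ x, f x = 0
  · exact ⟨1, one_pos, (setLIntegral_le_lintegral _ _).trans (by simp [h0])⟩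
  have hlt : (∫⁻ x, f x) - ε < ∫⁻ x, f x := ENNReal.sub_lt_self hf h0 hε
  obtain ⟨n, hn⟩ := ((tendsto_setLIntegral_ball f).eventually (lt_mem_nhds hlt)).exists
  refine ⟨n + 1, by positivity, ?_⟩
  have hadd := lintegral_add_compl f
    (Metric.isOpen_ball (x := (0 : Space d)) (ε := (n : ℝ) + 1)).measurableSet (μ := volume)
  have hfin : ∫⁻ x in Metric.ball (0 : Space d) ((n : ℝ) + 1), f x ≠ ∞ :=
    ((setLIntegral_le_lintegral _ _).trans_lt (lt_top_iff_ne_top.2 hf)).ne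
  have h2 : ∫⁻ x, f x ≤ (∫⁻ x in Metric.ball (0 : Space d) ((n : ℝ) + 1), f x) + ε :=
    tsub_le_iff_right.1 hn.le
  rw [← hadd] at h2
  exact (ENNReal.add_le_add_iff_left hfin).1 h2

/-- A free wave of bounded energy does not gain energy. -/
theorem IsFreeWave.energy_le_energy_zero (hU : IsFreeWave U) {B : ℝ≥0}
    (hB : ∀ t, energy U t ≤ B) (t : ℝ) : energy U t ≤ energy U 0 := by
  obtain ⟨C, hC0, hC⟩ := exists_deriv_smoothTransition_le
  have hfin : ∀ s, energy U s ≠ ∞ := fun s => ((hB s).trans_lt ENNReal.coe_lt_top).ne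
  have hFs : ContDiff ℝ 1 fun z => covectorEnergy (fderiv ℝ U z) :=
    contDiff_covectorEnergy.comp hU.contDiff_fderiv
  have hR : ∀ R : ℝ, 0 < R → ∫⁻ x in Metric.ball 0 R,
      ENNReal.ofReal (covectorEnergy (fderiv ℝ U (x, t))) ≤
        energy U 0 + ENNReal.ofReal (4 * C / R * B * |t|) := by
    intro R hR
    set χ : Space d → ℝ := radialCutoff 2 (R ^ 2)⁻¹ with hχdef
    have hχ : Continuous χ := (contDiff_radialCutoff _ _).continuous
    have hχc : HasCompactSupport χ := hasCompactSupport_radialCutoff _ (by positivity)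
    have hχ0 : ∀ x, 0 ≤ χ x := fun x => smoothTransition.nonneg _
    have hχ1 : ∀ x, χ x ≤ 1 := fun x => smoothTransition.le_one _
    have hint : ∀ s, Integrable fun x => χ x * covectorEnergy (fderiv ℝ U (x, s)) := fun s =>
      (hχ.mul (hFs.continuous.comp (by fun_prop))).integrable_of_hasCompactSupport hχc.mul_right
    have hnn : ∀ s x, 0 ≤ χ x * covectorEnergy (fderiv ℝ U (x, s)) := fun s x =>
      mul_nonneg (hχ0 x) (covectorEnergy_nonneg _)
    have hmv := Convex.norm_image_sub_le_of_norm_hasDerivWithin_le (s := Set.univ)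
      (f := fun s => ∫ x, χ x * covectorEnergy (fderiv ℝ U (x, s))) (C := 4 * C / R * B)
      (x := 0) (y := t)
      (fun s _ => (hasDerivAt_integral_cutoff hχ hχc hFs s).hasDerivWithinAt)
      (fun s _ => (hU.abs_deriv_cutoff_energy_le hR hC (hfin s)).trans (by
        gcongr
        exact ENNReal.toReal_le_coe_of_le_coe (hB s)))
      convex_univ trivial trivial
    rw [sub_zero, Real.norm_eq_abs, Real.norm_eq_abs] at hmv
    have h1 := (abs_le.1 hmv).2
    calc
      _ ≤ ∫⁻ x, ENNReal.ofReal (χ x * covectorEnergy (fderiv ℝ U (x, t))) := by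
        rw [← lintegral_indicator Metric.isOpen_ball.measurableSet]
        refine lintegral_mono fun x => Set.indicator_apply_le' (fun hx => ?_) fun _ => zero_le
        have : χ x = 1 := by
          refine smoothTransition.one_of_one_le ?_
          rw [mem_ball_zero_iff] at hx
          have : (R ^ 2)⁻¹ * ‖x‖ ^ 2 ≤ 1 := by
            rw [inv_mul_le_iff₀ (by positivity), mul_one]
            gcongr
          linarith
        rw [this, one_mul]
      _ = ENNReal.ofReal (∫ x, χ x * covectorEnergy (fderiv ℝ U (x, t))) :=
        (ofReal_integral_eq_lintegral_ofReal (hint t) (Eventually.of_forall (hnn t))).symm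
      _ ≤ ENNReal.ofReal ((∫ x, χ x * covectorEnergy (fderiv ℝ U (x, 0))) +
            4 * C / R * B * |t|) := ENNReal.ofReal_le_ofReal (by linarith)
      _ ≤ ENNReal.ofReal (∫ x, χ x * covectorEnergy (fderiv ℝ U (x, 0))) +
            ENNReal.ofReal (4 * C / R * B * |t|) := ENNReal.ofReal_add_le
      _ ≤ _ := by
        gcongr
        rw [ofReal_integral_eq_lintegral_ofReal (hint 0) (Eventually.of_forall (hnn 0))]
        refine lintegral_mono fun x => ENNReal.ofReal_le_ofReal ?_
        exact mul_le_of_le_one_left (covectorEnergy_nonneg _) (hχ1 x)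
  have hlim1 : Tendsto (fun n : ℕ => ∫⁻ x in Metric.ball 0 ((n : ℝ) + 1),
      ENNReal.ofReal (covectorEnergy (fderiv ℝ U (x, t)))) atTop (nhds (energy U t)) :=
    tendsto_setLIntegral_ball _
  have hlim2 : Tendsto (fun n : ℕ => energy U 0 +
      ENNReal.ofReal (4 * C / ((n : ℝ) + 1) * B * |t|)) atTop (nhds (energy U 0)) := by
    have h : Tendsto (fun n : ℕ => 4 * C * B * |t| * (1 / ((n : ℝ) + 1))) atTop
        (nhds (4 * C * B * |t| * 0)) :=
      tendsto_one_div_add_atTop_nhds_zero_nat.const_mul _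
    have h2 := (ENNReal.tendsto_ofReal h).const_add (energy U 0)
    simp only [mul_zero, ENNReal.ofReal_zero, add_zero] at h2
    refine h2.congr fun n => ?_
    congr 2
    ring
  exact le_of_tendsto_of_tendsto' hlim1 hlim2 fun n => hR _ (by positivity)

end

/-! ### Interior decay for waves with a square integrable scaling derivative -/

section
variable {V : Space d × ℝ → ℝ}

lemma abs_mul_le_of_sq_le {F a S t : ℝ} (ht : 0 ≤ t) (h : a ^ 2 ≤ t ^ 2 * S) (hS : 0 ≤ S) :
    |F * a| ≤ t * (F ^ 2 + S) / 2 := by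
  refine abs_le_of_sq_le_sq ?_ (by positivity)
  have h1 : F ^ 2 * a ^ 2 ≤ F ^ 2 * (t ^ 2 * S) := by gcongr
  nlinarith [mul_nonneg (sq_nonneg t) (sq_nonneg (F ^ 2 - S))]

/-- The generator of dilations applied to a function on spacetime. -/
noncomputable def scalingDeriv (V : Space d × ℝ → ℝ) (z : Space d × ℝ) : ℝ := fderiv ℝ V z z

lemma IsFreeWave.contDiff_scalingDeriv (hV : IsFreeWave V) : ContDiff ℝ 1 (scalingDeriv V) :=
  hV.contDiff_fderiv.clm_apply contDiff_id

lemma IsFreeWave.fderiv_scalingDeriv_apply (hV : IsFreeWave V) (z w : Space d × ℝ) :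
    fderiv ℝ (scalingDeriv V) z w = fderiv ℝ (fderiv ℝ V) z w z + fderiv ℝ V z w := by
  have h : HasFDerivAt (scalingDeriv V) _ z :=
    (hV.differentiable_fderiv z).hasFDerivAt.clm_apply (hasFDerivAt_id z)
  rw [h.fderiv]
  simp [add_comm]

/-- The wave equation rewritten in terms of the scaling derivative, at a fixed time. -/
lemma IsFreeWave.degenerate_elliptic_eq (hV : IsFreeWave V) (x : Space d) (t : ℝ) :
    t ^ 2 * ∑ i, fderiv ℝ (fderiv ℝ V) (x, t) (basisVec i, 0) (basisVec i, 0) -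
      fderiv ℝ (fderiv ℝ V) (x, t) (x, 0) (x, 0) =
    t * fderiv ℝ (scalingDeriv V) (x, t) (0, 1) - fderiv ℝ (scalingDeriv V) (x, t) (x, 0) -
      scalingDeriv V (x, t) + 2 * fderiv ℝ V (x, t) (x, 0) := by
  have hz : ((x, t) : Space d × ℝ) = (x, 0) + t • (0, 1) := by simp
  have h : ∀ ℓ : Space d × ℝ →L[ℝ] ℝ, ℓ (x, t) = ℓ (x, 0) + t * ℓ (0, 1) := fun ℓ => by
    rw [hz, map_add, map_smul, smul_eq_mul]
  rw [← hV.wave_eq, hV.fderiv_scalingDeriv_apply, hV.fderiv_scalingDeriv_apply, scalingDeriv,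
    h, h, h, hV.snd_fderiv_symm _ (0, 1) (x, 0)]
  ring

/-- The vector field whose divergence yields the interior estimate. -/
noncomputable def interiorField (V : Space d × ℝ → ℝ) (η t : ℝ) (i : Fin d) (x : Space d) : ℝ :=
  radialCutoff (t / η) (t * η)⁻¹ x * (V (x, t) *
    (t ^ 2 * fderiv ℝ V (x, t) (basisVec i, 0) - x i * fderiv ℝ V (x, t) (x, 0)))

lemma IsFreeWave.contDiff_interiorField (hV : IsFreeWave V) (η t : ℝ) (i : Fin d) :
    ContDiff ℝ 1 (interiorField V η t i) := by
  have hV1 : ContDiff ℝ 1 fun x => V (x, t) :=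
    (hV.contDiff.of_le (by norm_num)).comp (contDiff_id.prodMk contDiff_const)
  have hDs : ContDiff ℝ 1 fun x => fderiv ℝ V (x, t) :=
    hV.contDiff_fderiv.comp (contDiff_id.prodMk contDiff_const)
  have hx : ContDiff ℝ 1 fun x : Space d => x i :=
    (EuclideanSpace.proj (𝕜 := ℝ) i).contDiff
  exact (contDiff_radialCutoff _ _).mul (hV1.mul ((contDiff_const.mul
    (hDs.clm_apply contDiff_const)).sub (hx.mul (hDs.clm_apply
      (contDiff_id.prodMk contDiff_const)))))

lemma hasCompactSupport_interiorField (V : Space d × ℝ → ℝ) {η t : ℝ} (hη : 0 < η) (ht : 0 < t)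
    (i : Fin d) : HasCompactSupport (interiorField V η t i) :=
  (hasCompactSupport_radialCutoff _ (by positivity)).mul_right

lemma IsFreeWave.sum_fderiv_interiorField (hV : IsFreeWave V) (η t : ℝ) (x : Space d) :
    ∑ i, fderiv ℝ (interiorField V η t i) x (basisVec i) =
      -(2 * (deriv smoothTransition (t / η - (t * η)⁻¹ * ‖x‖ ^ 2) *
        ((t * η)⁻¹ * (t ^ 2 - ‖x‖ ^ 2))) * (V (x, t) * fderiv ℝ V (x, t) (x, 0))) +
      radialCutoff (t / η) (t * η)⁻¹ x *
        (t ^ 2 * ∑ i, fderiv ℝ V (x, t) (basisVec i, 0) ^ 2 - fderiv ℝ V (x, t) (x, 0) ^ 2) +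
      radialCutoff (t / η) (t * η)⁻¹ x * (V (x, t) *
        (t * fderiv ℝ (scalingDeriv V) (x, t) (0, 1) - fderiv ℝ (scalingDeriv V) (x, t) (x, 0) -
          scalingDeriv V (x, t) - (d - 1) * fderiv ℝ V (x, t) (x, 0))) := by
  set ψ : Space d → ℝ := radialCutoff (t / η) (t * η)⁻¹ with hψ
  have hV1 : HasFDerivAt (fun x => V (x, t)) _ x := hasFDerivAt_slice hV.differentiable x t
  have hxi : ∀ i, HasFDerivAt (fun x : Space d => x i) (EuclideanSpace.proj (𝕜 := ℝ) i) x :=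
    fun i => (EuclideanSpace.proj (𝕜 := ℝ) i).hasFDerivAt
  have hrad : HasFDerivAt (fun x => fderiv ℝ V (x, t) (x, 0)) _ x :=
    (hasFDerivAt_slice hV.differentiable_fderiv x t).clm_apply (hasFDerivAt_prodMk_left x (0 : ℝ))
  have hψd : DifferentiableAt ℝ ψ x := (contDiff_radialCutoff _ _).differentiable (by norm_num) x
  have hterm : ∀ i, fderiv ℝ (interiorField V η t i) x (basisVec i) =
      deriv smoothTransition (t / η - (t * η)⁻¹ * ‖x‖ ^ 2) * (-(2 * (t * η)⁻¹ * x i)) *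
        (V (x, t) * (t ^ 2 * fderiv ℝ V (x, t) (basisVec i, 0) -
          x i * fderiv ℝ V (x, t) (x, 0))) +
      ψ x * (fderiv ℝ V (x, t) (basisVec i, 0) *
        (t ^ 2 * fderiv ℝ V (x, t) (basisVec i, 0) - x i * fderiv ℝ V (x, t) (x, 0)) +
      V (x, t) * (t ^ 2 * fderiv ℝ (fderiv ℝ V) (x, t) (basisVec i, 0) (basisVec i, 0) -
        (fderiv ℝ V (x, t) (x, 0) + x i * (fderiv ℝ (fderiv ℝ V) (x, t) (x, 0) (basisVec i, 0) +
          fderiv ℝ V (x, t) (basisVec i, 0))))) := by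
    intro i
    have h : HasFDerivAt (interiorField V η t i) _ x := hψd.hasFDerivAt.fun_mul
      (hV1.fun_mul (((hasFDerivAt_fderiv_slice hV.differentiable_fderiv x t
        (basisVec i, 0)).const_mul (t ^ 2)).sub
        ((hxi i).fun_mul hrad)))
    rw [h.fderiv]
    simp only [add_apply, smul_apply, smul_eq_mul, sub_apply]
    rw [hψ, fderiv_radialCutoff_apply]
    simp [EuclideanSpace.inner_single_right, hV.snd_fderiv_symm _ (basisVec i, 0) (x, 0)]
    ring
  have h1 : ∑ i, x i * fderiv ℝ V (x, t) (basisVec i, 0) = fderiv ℝ V (x, t) (x, 0) :=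
    sum_coord_mul_apply ((fderiv ℝ V (x, t)).comp (ContinuousLinearMap.inl ℝ (Space d) ℝ)) x
  have h2 : ∑ i, x i * fderiv ℝ (fderiv ℝ V) (x, t) (x, 0) (basisVec i, 0) =
      fderiv ℝ (fderiv ℝ V) (x, t) (x, 0) (x, 0) :=
    sum_coord_mul_apply ((fderiv ℝ (fderiv ℝ V) (x, t) (x, 0)).comp
      (ContinuousLinearMap.inl ℝ (Space d) ℝ)) x
  have h3 : ∑ i, x i ^ 2 = ‖x‖ ^ 2 := by simp [EuclideanSpace.norm_sq_eq]
  have h4 := hV.degenerate_elliptic_eq x t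
  have h5 : ∑ _i : Fin d, fderiv ℝ V (x, t) (x, 0) = d * fderiv ℝ V (x, t) (x, 0) := by simp
  simp only [hterm]
  set θ := deriv smoothTransition (t / η - (t * η)⁻¹ * ‖x‖ ^ 2)
  set a := fderiv ℝ V (x, t) (x, 0) with ha
  set b := (t * η)⁻¹
  calc
    _ = -(2 * b * θ * V (x, t)) * (t ^ 2 * (∑ i, x i * fderiv ℝ V (x, t) (basisVec i, 0)) -
          a * ∑ i, x i ^ 2) +
        ψ x * (t ^ 2 * (∑ i, fderiv ℝ V (x, t) (basisVec i, 0) ^ 2) -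
          a * ∑ i, x i * fderiv ℝ V (x, t) (basisVec i, 0)) +
        ψ x * (V (x, t) * ((t ^ 2 *
            ∑ i, fderiv ℝ (fderiv ℝ V) (x, t) (basisVec i, 0) (basisVec i, 0)
          - ∑ i, x i * fderiv ℝ (fderiv ℝ V) (x, t) (x, 0) (basisVec i, 0)) -
          (∑ _i : Fin d, a) - ∑ i, x i * fderiv ℝ V (x, t) (basisVec i, 0))) := by
      simp only [Finset.mul_sum, ← Finset.sum_sub_distrib, ← Finset.sum_add_distrib]
      refine Finset.sum_congr rfl fun i _ => ?_
      ring
    _ = _ := by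
      rw [h1, h2, h3, h4, h5]
      ring

/-- The density controlling the error terms of the interior estimate. -/
noncomputable def controlDensity (V : Space d × ℝ → ℝ) (z : Space d × ℝ) : ℝ :=
  V z ^ 2 + covectorEnergy (fderiv ℝ V z) + scalingDeriv V z ^ 2 +
    covectorEnergy (fderiv ℝ (scalingDeriv V) z)

lemma cutoff_arg_eq {η t : ℝ} (hη : 0 < η) (ht : 0 < t) (x : Space d) :
    t / η - (t * η)⁻¹ * ‖x‖ ^ 2 = (t * η)⁻¹ * (t ^ 2 - ‖x‖ ^ 2) := by
  field_simp

lemma norm_le_of_cutoff_arg_pos {η t : ℝ} (hη : 0 < η) (ht : 0 < t) {x : Space d}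
    (h : 0 < t / η - (t * η)⁻¹ * ‖x‖ ^ 2) : ‖x‖ ^ 2 ≤ t ^ 2 := by
  rw [cutoff_arg_eq hη ht] at h
  have := (pos_iff_pos_of_mul_pos h).1 (by positivity)
  linarith

lemma IsFreeWave.interior_remainder_le (hV : IsFreeWave V) {C η t : ℝ}
    (hC : ∀ q, |deriv smoothTransition q| ≤ C) (hη : 0 < η) (ht : 1 ≤ t) (x : Space d) :
    radialCutoff (t / η) (t * η)⁻¹ x *
        (t ^ 2 * ∑ i, fderiv ℝ V (x, t) (basisVec i, 0) ^ 2 - fderiv ℝ V (x, t) (x, 0) ^ 2) -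
      ∑ i, fderiv ℝ (interiorField V η t i) x (basisVec i) ≤
    t * (C + d + 2) * controlDensity V (x, t) := by
  have ht0 : 0 < t := one_pos.trans_le ht
  have hC0 : 0 ≤ C := (abs_nonneg _).trans (hC 0)
  rw [hV.sum_fderiv_interiorField, controlDensity, ← cutoff_arg_eq hη ht0,
    covectorEnergy_eq_sum, covectorEnergy_eq_sum]
  have hS0 : 0 ≤ ∑ i, fderiv ℝ V (x, t) (basisVec i, 0) ^ 2 :=
    Finset.sum_nonneg fun _ _ => sq_nonneg _
  have hT0 : 0 ≤ ∑ i, fderiv ℝ (scalingDeriv V) (x, t) (basisVec i, 0) ^ 2 :=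
    Finset.sum_nonneg fun _ _ => sq_nonneg _
  have ha := sq_apply_space_le (fderiv ℝ V (x, t)) x
  have hm := sq_apply_space_le (fderiv ℝ (scalingDeriv V) (x, t)) x
  rw [radialCutoff]
  have hpos := norm_le_of_cutoff_arg_pos hη ht0 (x := x)
  set q := t / η - (t * η)⁻¹ * ‖x‖ ^ 2 with hq
  set S := ∑ i, fderiv ℝ V (x, t) (basisVec i, 0) ^ 2
  set T := ∑ i, fderiv ℝ (scalingDeriv V) (x, t) (basisVec i, 0) ^ 2
  set a := fderiv ℝ V (x, t) (x, 0)
  set b := fderiv ℝ V (x, t) (0, 1)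
  set P := scalingDeriv V (x, t)
  set m := fderiv ℝ (scalingDeriv V) (x, t) (x, 0)
  set n := fderiv ℝ (scalingDeriv V) (x, t) (0, 1)
  set F := V (x, t)
  by_cases h0 : q ≤ 0
  · rw [deriv_smoothTransition_of_nonpos h0, smoothTransition.zero_of_nonpos h0]
    ring_nf
    positivity
  have hxt := hpos (not_le.1 h0)
  have hFa : |F * a| ≤ t * (F ^ 2 + S) / 2 :=
    abs_mul_le_of_sq_le ht0.le (ha.trans (by gcongr)) hS0
  have hFm : |F * m| ≤ t * (F ^ 2 + T) / 2 :=
    abs_mul_le_of_sq_le ht0.le (hm.trans (by gcongr)) hT0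
  have hFn : |F * (t * n)| ≤ t * (F ^ 2 + n ^ 2) / 2 :=
    abs_mul_le_of_sq_le ht0.le (by rw [mul_pow]) (sq_nonneg n)
  have hFP : |F * P| ≤ t * (F ^ 2 + P ^ 2) / 2 :=
    abs_mul_le_of_sq_le ht0.le (le_mul_of_one_le_left (sq_nonneg P) (one_le_pow₀ ht)) (sq_nonneg P)
  have hθ : |deriv smoothTransition q * q| ≤ C := by
    by_cases h1 : 1 ≤ q
    · simpa [deriv_smoothTransition_of_one_le h1] using hC0
    · rw [abs_mul, abs_of_pos (not_le.1 h0)]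
      exact (mul_le_of_le_one_right (abs_nonneg _) (not_le.1 h1).le).trans (hC q)
  have hψ0 := smoothTransition.nonneg q
  have hψ1 := smoothTransition.le_one q
  set ψ := smoothTransition q
  have h1 : 2 * (deriv smoothTransition q * q) * (F * a) ≤ 2 * C * (t * (F ^ 2 + S) / 2) := by
    refine (le_abs_self _).trans ?_
    rw [abs_mul, abs_mul, abs_two]
    gcongr
  have h2 : -(ψ * (F * (t * n - m - P - (d - 1) * a))) ≤
      t * (F ^ 2 + n ^ 2) / 2 + t * (F ^ 2 + T) / 2 + t * (F ^ 2 + P ^ 2) / 2 +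
        (d + 1) * (t * (F ^ 2 + S) / 2) := by
    have hd1 : |(d - 1 : ℝ)| ≤ d + 1 := by
      have : (0 : ℝ) ≤ d := Nat.cast_nonneg d
      rw [abs_le]; constructor <;> linarith
    have h3 : |(d - 1 : ℝ) * (F * a)| ≤ (d + 1) * (t * (F ^ 2 + S) / 2) := by
      rw [abs_mul]; gcongr
    have h4 : |F * (t * n - m - P - (d - 1) * a)| ≤ t * (F ^ 2 + n ^ 2) / 2 +
        t * (F ^ 2 + T) / 2 + t * (F ^ 2 + P ^ 2) / 2 + (d + 1) * (t * (F ^ 2 + S) / 2) := by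
      have h5 : F * (t * n - m - P - (d - 1) * a) =
        F * (t * n) - F * m - F * P - (d - 1) * (F * a) := by ring
      rw [h5]
      rw [abs_le] at *
      constructor <;> linarith [hFn.1, hFn.2, hFm.1, hFm.2, hFP.1, hFP.2, h3.1, h3.2]
    refine (neg_le_abs _).trans ?_
    rw [abs_mul, abs_of_nonneg hψ0]
    exact (mul_le_of_le_one_left (abs_nonneg _) hψ1).trans h4
  have hd0 : (0 : ℝ) ≤ d := Nat.cast_nonneg d
  have h6 : 2 * C * (t * (F ^ 2 + S) / 2) + (t * (F ^ 2 + n ^ 2) / 2 + t * (F ^ 2 + T) / 2 +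
      t * (F ^ 2 + P ^ 2) / 2 + (d + 1) * (t * (F ^ 2 + S) / 2)) ≤
      t * (C + d + 2) * (F ^ 2 + (S + b ^ 2) + P ^ 2 + (T + n ^ 2)) := by
    have : 0 ≤ t * ((C + d + 2) * b ^ 2 + (C + d + 3 / 2) * (P ^ 2 + T + n ^ 2) +
      (d / 2) * F ^ 2 + (d / 2 + 3 / 2) * S) := by positivity
    nlinarith
  linarith

end

section
variable {V : Space d × ℝ → ℝ}

lemma ofReal_integral_le_lintegral_ofReal {α : Type*} [MeasurableSpace α] {μ : Measure α}
    {f : α → ℝ} (hf : Integrable f μ) :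
    ENNReal.ofReal (∫ x, f x ∂μ) ≤ ∫⁻ x, ENNReal.ofReal (f x) ∂μ := by
  have h : ∫ x, f x ∂μ ≤ ∫ x, max (f x) 0 ∂μ :=
    integral_mono hf hf.pos_part fun x => le_max_left _ _
  refine (ENNReal.ofReal_le_ofReal h).trans_eq ?_
  rw [ofReal_integral_eq_lintegral_ofReal hf.pos_part
    (Eventually.of_forall fun x => le_max_right _ _)]
  simp

lemma two_mul_ofReal (y : ℝ) : 2 * ENNReal.ofReal y = ENNReal.ofReal (2 * y) := by
  rw [ENNReal.ofReal_mul zero_le_two, ENNReal.ofReal_ofNat]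

lemma IsFreeWave.ball_energy_density_le {η t : ℝ} (hη : 1 ≤ η) (ht : η < t) {x : Space d}
    (hx : ‖x‖ < t - η) :
    η * covectorEnergy (fderiv ℝ V (x, t)) ≤ 3 / t * (radialCutoff (t / η) (t * η)⁻¹ x *
        (t ^ 2 * ∑ i, fderiv ℝ V (x, t) (basisVec i, 0) ^ 2 - fderiv ℝ V (x, t) (x, 0) ^ 2)) +
      2 * scalingDeriv V (x, t) ^ 2 := by
  have hη0 : 0 < η := one_pos.trans_le hη
  have ht0 : 0 < t := hη0.trans ht
  have hr : t * η ≤ t ^ 2 - ‖x‖ ^ 2 := by nlinarith [norm_nonneg x]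
  have hψ : radialCutoff (t / η) (t * η)⁻¹ x = 1 := by
    refine smoothTransition.one_of_one_le ?_
    rw [cutoff_arg_eq hη0 ht0, le_inv_mul_iff₀ (by positivity), mul_one]
    exact hr
  have hP : scalingDeriv V (x, t) = fderiv ℝ V (x, t) (x, 0) + t * fderiv ℝ V (x, t) (0, 1) := by
    have hz : ((x, t) : Space d × ℝ) = (x, 0) + t • (0, 1) := by simp
    rw [scalingDeriv]
    nth_rewrite 2 [hz]
    rw [map_add, map_smul, smul_eq_mul]
  have ha := sq_apply_space_le (fderiv ℝ V (x, t)) x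
  have hS0 : 0 ≤ ∑ i, fderiv ℝ V (x, t) (basisVec i, 0) ^ 2 :=
    Finset.sum_nonneg fun _ _ => sq_nonneg _
  rw [hψ, one_mul, hP, covectorEnergy_eq_sum]
  set S := ∑ i, fderiv ℝ V (x, t) (basisVec i, 0) ^ 2
  set a := fderiv ℝ V (x, t) (x, 0)
  set b := fderiv ℝ V (x, t) (0, 1)
  have h1 : η * S ≤ 1 / t * (t ^ 2 * S - a ^ 2) := by
    rw [one_div, le_inv_mul_iff₀ ht0]
    nlinarith [mul_le_mul_of_nonneg_right hr hS0]
  have h2 : a ^ 2 ≤ t ^ 2 * S := ha.trans (by gcongr; nlinarith)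
  have h3 : η * b ^ 2 ≤ 2 * (a + t * b) ^ 2 + 2 * (η * S) := by
    have h4 : t ^ 2 * b ^ 2 ≤ 2 * (a + t * b) ^ 2 + 2 * (t ^ 2 * S) := by
      nlinarith [sq_nonneg (a + (a + t * b))]
    have h5 : t ^ 2 * (η * b ^ 2) ≤ t ^ 2 * (2 * (a + t * b) ^ 2 + 2 * (η * S)) := by
      have h6 : η * (2 * (a + t * b) ^ 2) ≤ t ^ 2 * (2 * (a + t * b) ^ 2) := by
        gcongr
        nlinarith
      nlinarith [mul_le_mul_of_nonneg_left h4 hη0.le]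
    exact le_of_mul_le_mul_left h5 (by positivity)
  have h7 : 3 / t * (t ^ 2 * S - a ^ 2) = 3 * (1 / t * (t ^ 2 * S - a ^ 2)) := by ring
  rw [h7]
  linarith

lemma IsFreeWave.lintegral_controlDensity_le (hV : IsFreeWave V) {t : ℝ} {B : ℝ≥0∞}
    (h1 : mass V t ≤ B) (h2 : energy V t ≤ B) (h3 : mass (scalingDeriv V) t ≤ B)
    (h4 : energy (scalingDeriv V) t ≤ B) :
    ∫⁻ x, ENNReal.ofReal (controlDensity V (x, t)) ≤ 4 * B := by
  have hpt : ∀ x, ENNReal.ofReal (controlDensity V (x, t)) =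
      ENNReal.ofReal (V (x, t) ^ 2) + ENNReal.ofReal (covectorEnergy (fderiv ℝ V (x, t))) +
        ENNReal.ofReal (scalingDeriv V (x, t) ^ 2) +
          ENNReal.ofReal (covectorEnergy (fderiv ℝ (scalingDeriv V) (x, t))) := fun x => by
    have e1 := covectorEnergy_nonneg (fderiv ℝ V (x, t))
    have e2 := covectorEnergy_nonneg (fderiv ℝ (scalingDeriv V) (x, t))
    rw [controlDensity, ENNReal.ofReal_add (by positivity) e2,
      ENNReal.ofReal_add (by positivity) (by positivity), ENNReal.ofReal_add (by positivity) e1]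
  have m2 : Measurable fun x => ENNReal.ofReal (covectorEnergy (fderiv ℝ V (x, t))) :=
    (ENNReal.continuous_ofReal.comp (continuous_covectorEnergy.comp
      (hV.continuous_fderiv.comp (by fun_prop)))).measurable
  have m3 : Measurable fun x => ENNReal.ofReal (scalingDeriv V (x, t) ^ 2) :=
    (ENNReal.continuous_ofReal.comp
      ((hV.contDiff_scalingDeriv.continuous.comp (by fun_prop)).pow 2)).measurable
  have m4 : Measurable fun x =>
      ENNReal.ofReal (covectorEnergy (fderiv ℝ (scalingDeriv V) (x, t))) :=
    (ENNReal.continuous_ofReal.comp (continuous_covectorEnergy.comp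
      ((hV.contDiff_scalingDeriv.continuous_fderiv (by norm_num)).comp
        (by fun_prop : Continuous fun x : Space d => (x, t))))).measurable
  simp only [hpt]
  rw [lintegral_add_right _ m4, lintegral_add_right _ m3, lintegral_add_right _ m2]
  calc _ ≤ B + B + B + B := by gcongr <;> assumption
    _ = 4 * B := by ring

/-- Waves which are bounded in energy and in `L²` together with their scaling derivative have
interior energy `O(1 / η)` in the region `|x| < t - η`. -/
theorem exists_interior_energy_le (d : ℕ) : ∃ K : ℝ≥0, ∀ V : Space d × ℝ → ℝ, IsFreeWave V →
    ∀ (η t : ℝ) (B : ℝ≥0∞), 1 ≤ η → η < t → mass V t ≤ B → energy V t ≤ B →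
    mass (scalingDeriv V) t ≤ B → energy (scalingDeriv V) t ≤ B →
    ENNReal.ofReal η * ∫⁻ x in Metric.ball 0 (t - η),
      ENNReal.ofReal (covectorEnergy (fderiv ℝ V (x, t))) ≤ K * B := by
  obtain ⟨C, hC0, hC⟩ := exists_deriv_smoothTransition_le
  refine ⟨⟨3 * (C + d + 2) * 4 + 2, by positivity⟩, fun V hV η t B hη ht h1 h2 h3 h4 => ?_⟩
  have hη0 : 0 < η := one_pos.trans_le hη
  have ht0 : 0 < t := hη0.trans ht
  set A : Space d → ℝ := fun x => radialCutoff (t / η) (t * η)⁻¹ x *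
    (t ^ 2 * ∑ i, fderiv ℝ V (x, t) (basisVec i, 0) ^ 2 - fderiv ℝ V (x, t) (x, 0) ^ 2) with hA
  have hDs : Continuous fun x => fderiv ℝ V (x, t) := hV.continuous_fderiv.comp (by fun_prop)
  have hAc : Continuous A := by
    refine (contDiff_radialCutoff _ _).continuous.mul ((continuous_const.mul
      (continuous_finsetSum _ fun i _ => (hDs.clm_apply continuous_const).pow 2)).sub
        ((hDs.clm_apply (by fun_prop)).pow 2))
  have hAi : Integrable A := hAc.integrable_of_hasCompactSupport
    (hasCompactSupport_radialCutoff _ (by positivity)).mul_right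
  have hA0 : ∀ x, 0 ≤ A x := fun x => by
    by_cases h0 : t / η - (t * η)⁻¹ * ‖x‖ ^ 2 ≤ 0
    · change 0 ≤ radialCutoff (t / η) (t * η)⁻¹ x * _
      rw [radialCutoff, smoothTransition.zero_of_nonpos h0, zero_mul]
    · refine mul_nonneg (smoothTransition.nonneg _) (sub_nonneg.2 ?_)
      refine (sq_apply_space_le (fderiv ℝ V (x, t)) x).trans ?_
      have := norm_le_of_cutoff_arg_pos hη0 ht0 (not_le.1 h0)
      gcongr
  have hWi : Integrable fun x => ∑ i, fderiv ℝ (interiorField V η t i) x (basisVec i) :=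
    integrable_finsetSum _ fun i _ => (((hV.contDiff_interiorField η t i).continuous_fderiv
      (by norm_num)).clm_apply continuous_const).integrable_of_hasCompactSupport
        ((hasCompactSupport_interiorField V hη0 ht0 i).fderiv_apply ℝ _)
  have hAint : ∫ x, A x =
      ∫ x, (A x - ∑ i, fderiv ℝ (interiorField V η t i) x (basisVec i)) := by
    rw [integral_sub hAi hWi, sum_integral_fderiv_eq_zero (hV.contDiff_interiorField η t)
      (hasCompactSupport_interiorField V hη0 ht0), sub_zero]
  have hAle : ∫⁻ x, ENNReal.ofReal (A x) ≤ ENNReal.ofReal (t * (C + d + 2)) * (4 * B) := by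
    rw [← ofReal_integral_eq_lintegral_ofReal hAi (Eventually.of_forall hA0), hAint]
    refine (ofReal_integral_le_lintegral_ofReal (hAi.sub hWi)).trans ?_
    refine le_trans ?_ (mul_le_mul' le_rfl (hV.lintegral_controlDensity_le h1 h2 h3 h4))
    rw [← lintegral_const_mul' _ _ ENNReal.ofReal_ne_top]
    refine lintegral_mono fun x => ?_
    rw [← ENNReal.ofReal_mul (by positivity)]
    exact ENNReal.ofReal_le_ofReal
      (hV.interior_remainder_le hC hη0 (hη.trans ht.le) x)
  have hm : Measurable fun x => ENNReal.ofReal (3 / t) * ENNReal.ofReal (A x) :=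
    (ENNReal.continuous_ofReal.comp hAc).measurable.const_mul _
  calc
    _ = ∫⁻ x in Metric.ball 0 (t - η),
        ENNReal.ofReal η * ENNReal.ofReal (covectorEnergy (fderiv ℝ V (x, t))) :=
      (lintegral_const_mul' _ _ ENNReal.ofReal_ne_top).symm
    _ ≤ ∫⁻ x in Metric.ball 0 (t - η), (ENNReal.ofReal (3 / t) * ENNReal.ofReal (A x) +
          2 * ENNReal.ofReal (scalingDeriv V (x, t) ^ 2)) := by
      refine setLIntegral_mono' Metric.isOpen_ball.measurableSet fun x hx => ?_
      rw [two_mul_ofReal, ← ENNReal.ofReal_mul hη0.le,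
        ← ENNReal.ofReal_mul (by positivity),
        ← ENNReal.ofReal_add (mul_nonneg (by positivity) (hA0 x)) (by positivity)]
      exact ENNReal.ofReal_le_ofReal
        (IsFreeWave.ball_energy_density_le hη ht (mem_ball_zero_iff.1 hx))
    _ ≤ ∫⁻ x, (ENNReal.ofReal (3 / t) * ENNReal.ofReal (A x) +
          2 * ENNReal.ofReal (scalingDeriv V (x, t) ^ 2)) := setLIntegral_le_lintegral _ _
    _ = ENNReal.ofReal (3 / t) * (∫⁻ x, ENNReal.ofReal (A x)) + 2 * mass (scalingDeriv V) t := by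
      rw [lintegral_add_left hm, lintegral_const_mul' _ _ ENNReal.ofReal_ne_top,
        lintegral_const_mul' _ _ ENNReal.ofNat_ne_top, mass]
    _ ≤ ENNReal.ofReal (3 / t) * (ENNReal.ofReal (t * (C + d + 2)) * (4 * B)) + 2 * B := by
      gcongr
    _ = _ := by
      have e1 : ENNReal.ofReal (3 / t) * (ENNReal.ofReal (t * (C + d + 2)) * (4 * B)) =
          ENNReal.ofReal (3 * (C + d + 2) * 4) * B := by
        rw [← mul_assoc, ← mul_assoc, ← ENNReal.ofReal_mul (by positivity),
          ← ENNReal.ofReal_ofNat 4, ← ENNReal.ofReal_mul (by positivity)]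
        congr 2
        field_simp
      rw [e1, ← ENNReal.ofReal_ofNat 2, ← add_mul,
        ← ENNReal.ofReal_add (by positivity) (by positivity)]
      congr 1
      exact ENNReal.ofReal_eq_coe_nnreal _

end

/-! ### Averages over a parameter -/

section
variable {E : Type*} [NormedAddCommGroup E] [NormedSpace ℝ E]

lemma lintegral_convex_average_le [CompleteSpace E] {Φ : E → ℝ} (hΦ : ConvexOn ℝ Set.univ Φ)
    (hc : Continuous Φ) {F : Space d → ℝ → E} (hF : Continuous (Function.uncurry F))
    {C : ℝ≥0∞} (hC : ∀ s ∈ Set.Ioc (0 : ℝ) 1, ∫⁻ x, ENNReal.ofReal (Φ (F x s)) ≤ C) :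
    ∫⁻ x, ENNReal.ofReal (Φ (∫ s in (0 : ℝ)..1, F x s)) ≤ C := by
  have : IsProbabilityMeasure ((volume : Measure ℝ).restrict (Set.Ioc 0 1)) := ⟨by simp⟩
  have hJ : ∀ x, ENNReal.ofReal (Φ (∫ s in (0 : ℝ)..1, F x s)) ≤
      ∫⁻ s in Set.Ioc (0 : ℝ) 1, ENNReal.ofReal (Φ (F x s)) := fun x => by
    have hFx : Continuous (F x) := hF.comp (by fun_prop : Continuous fun s : ℝ => (x, s))
    have hi : Integrable (F x) (volume.restrict (Set.Ioc (0 : ℝ) 1)) :=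
      (hFx.integrableOn_Icc (a := 0) (b := 1)).mono_set Set.Ioc_subset_Icc_self
    have hΦi : Integrable (Φ ∘ F x) (volume.restrict (Set.Ioc (0 : ℝ) 1)) :=
      ((hc.comp hFx).integrableOn_Icc (a := 0) (b := 1)).mono_set Set.Ioc_subset_Icc_self
    rw [intervalIntegral.integral_of_le zero_le_one]
    refine (ENNReal.ofReal_le_ofReal (hΦ.map_integral_le hc.continuousOn isClosed_univ
      (Eventually.of_forall fun _ => Set.mem_univ _) hi hΦi)).trans ?_
    exact ofReal_integral_le_lintegral_ofReal hΦi
  refine (lintegral_mono hJ).trans ?_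
  rw [lintegral_lintegral_swap (f := fun x s => ENNReal.ofReal (Φ (F x s)))
    (ENNReal.continuous_ofReal.comp (hc.comp hF)).measurable.aemeasurable]
  refine (setLIntegral_mono measurable_const hC).trans ?_
  simp

lemma continuous_dilationIntegral {F : Space d × ℝ → E} (hF : Continuous F) {w : ℝ → ℝ}
    (hw : Continuous w) (δ : ℝ) :
    Continuous fun z => ∫ s in (0 : ℝ)..1, w s • F (exp (δ * s) • z) :=
  intervalIntegral.continuous_parametric_intervalIntegral_of_continuous' (by fun_prop) _ _

lemma map_dilationIntegral [CompleteSpace E] {F : Space d × ℝ → E} (hF : Continuous F) {w : ℝ → ℝ}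
    (hw : Continuous w) (δ : ℝ) (T : E →L[ℝ] ℝ) (z : Space d × ℝ) :
    T (∫ s in (0 : ℝ)..1, w s • F (exp (δ * s) • z)) =
      ∫ s in (0 : ℝ)..1, w s * T (F (exp (δ * s) • z)) := by
  rw [← T.intervalIntegral_comp_comm (Continuous.intervalIntegrable (by fun_prop) _ _)]
  simp only [map_smul, smul_eq_mul]

lemma hasFDerivAt_dilationIntegral {F : Space d × ℝ → E} (hF : ContDiff ℝ 1 F) {w : ℝ → ℝ}
    (hw : Continuous w) (δ : ℝ) (z : Space d × ℝ) :
    HasFDerivAt (fun z => ∫ s in (0 : ℝ)..1, w s • F (exp (δ * s) • z))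
      (∫ s in (0 : ℝ)..1, (w s * exp (δ * s)) • fderiv ℝ F (exp (δ * s) • z)) z := by
  have hF' : Continuous (fderiv ℝ F) := hF.continuous_fderiv (by norm_num)
  have hcont : Continuous fun p : (Space d × ℝ) × ℝ =>
      (w p.2 * exp (δ * p.2)) • fderiv ℝ F (exp (δ * p.2) • p.1) := by fun_prop
  obtain ⟨C, hC⟩ := ((isCompact_closedBall z 1).prod
    (isCompact_Icc (a := (0 : ℝ)) (b := 1))).exists_bound_of_continuousOn hcont.continuousOn
  have hFc := hF.continuous
  refine intervalIntegral.hasFDerivAt_integral_of_dominated_of_fderiv_le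
    (F' := fun z s => (w s * exp (δ * s)) • fderiv ℝ F (exp (δ * s) • z)) (bound := fun _ => C)
    (Metric.closedBall_mem_nhds z one_pos)
    (Eventually.of_forall fun y => Continuous.aestronglyMeasurable (by fun_prop))
    (Continuous.intervalIntegrable (by fun_prop) _ _)
    (Continuous.aestronglyMeasurable (by fun_prop)) (Eventually.of_forall fun s hs y hy => ?_)
    (by simp) (Eventually.of_forall fun s hs y hy => ?_)
  · rw [Set.uIoc_of_le zero_le_one] at hs
    exact hC (y, s) ⟨hy, Set.Ioc_subset_Icc_self hs⟩
  · have h := ((hF.differentiable (by norm_num) (exp (δ * s) • y)).hasFDerivAt.comp y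
      ((hasFDerivAt_id y).const_smul (exp (δ * s)))).const_smul (w s)
    refine h.congr_fderiv ?_
    rw [ContinuousLinearMap.comp_smul, ContinuousLinearMap.comp_id, mul_smul]

end

/-! ### Dilations -/

section
variable {V : Space d × ℝ → ℝ}

/-- The rescaled function `z ↦ V (e^σ z)`. -/
noncomputable def dilate (V : Space d × ℝ → ℝ) (σ : ℝ) (z : Space d × ℝ) : ℝ := V (exp σ • z)

/-- The average of the rescaled functions `dilate V (δ s)` over `s ∈ [0, 1]`. -/
noncomputable def dilationAverage (V : Space d × ℝ → ℝ) (δ : ℝ) (z : Space d × ℝ) : ℝ :=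
  ∫ s in (0 : ℝ)..1, V (exp (δ * s) • z)

lemma fderiv_dilate (V : Space d × ℝ → ℝ) (σ : ℝ) (z : Space d × ℝ) :
    fderiv ℝ (dilate V σ) z = exp σ • fderiv ℝ V (exp σ • z) := by
  exact fderiv_comp_smul ..

lemma IsFreeWave.dilate (hV : IsFreeWave V) (σ : ℝ) : IsFreeWave (dilate V σ) where
  contDiff := hV.contDiff.comp (contDiff_id.const_smul (exp σ))
  wave_eq z := by
    have h : fderiv ℝ (FreeWave.dilate V σ) =
        exp σ • fun z => fderiv ℝ V (exp σ • z) := funext (fderiv_dilate V σ)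
    have h2 : fderiv ℝ (fderiv ℝ (FreeWave.dilate V σ)) z =
        exp σ • exp σ • fderiv ℝ (fderiv ℝ V) (exp σ • z) := by
      have hd : DifferentiableAt ℝ (fun z => fderiv ℝ V (exp σ • z)) z :=
        (hV.differentiable_fderiv _).comp z (differentiableAt_id.const_smul (exp σ))
      rw [h, fderiv_const_smul hd, fderiv_comp_smul]
    simp only [h2, smul_apply, hV.wave_eq, Finset.smul_sum]

lemma IsFreeWave.hasFDerivAt_dilationAverage (hV : IsFreeWave V) (δ : ℝ) (z : Space d × ℝ) :
    HasFDerivAt (dilationAverage V δ)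
      (∫ s in (0 : ℝ)..1, exp (δ * s) • fderiv ℝ V (exp (δ * s) • z)) z := by
  have h := hasFDerivAt_dilationIntegral (hV.contDiff.of_le (by norm_num))
    (continuous_const (y := 1)) δ z
  simp only [one_smul, one_mul] at h
  exact h

lemma IsFreeWave.fderiv_dilationAverage (hV : IsFreeWave V) (δ : ℝ) (z : Space d × ℝ) :
    fderiv ℝ (dilationAverage V δ) z =
      ∫ s in (0 : ℝ)..1, fderiv ℝ (FreeWave.dilate V (δ * s)) z := by
  simp only [(hV.hasFDerivAt_dilationAverage δ z).fderiv, fderiv_dilate]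

lemma IsFreeWave.dilationAverage (hV : IsFreeWave V) (δ : ℝ) :
    IsFreeWave (dilationAverage V δ) := by
  have h1 : fderiv ℝ (FreeWave.dilationAverage V δ) =
      fun z => ∫ s in (0 : ℝ)..1, exp (δ * s) • fderiv ℝ V (exp (δ * s) • z) :=
    funext fun z => (hV.hasFDerivAt_dilationAverage δ z).fderiv
  have h2 := hasFDerivAt_dilationIntegral hV.contDiff_fderiv
    (by fun_prop : Continuous fun s => exp (δ * s)) δ
  have hc2 : Continuous (fderiv ℝ (fderiv ℝ V)) :=
    hV.contDiff_fderiv.continuous_fderiv (by norm_num)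
  have h3 : fderiv ℝ (fderiv ℝ (FreeWave.dilationAverage V δ)) = fun z =>
      ∫ s in (0 : ℝ)..1, (exp (δ * s) * exp (δ * s)) • fderiv ℝ (fderiv ℝ V) (exp (δ * s) • z) := by
    rw [h1]; exact funext fun z => (h2 z).fderiv
  have hw : Continuous fun s => exp (δ * s) * exp (δ * s) := by fun_prop
  refine ⟨?_, fun z => ?_⟩
  · rw [show (2 : WithTop ℕ∞) = 1 + 1 by norm_num, contDiff_succ_iff_fderiv]
    refine ⟨fun z => (hV.hasFDerivAt_dilationAverage δ z).differentiableAt, by simp, ?_⟩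
    rw [contDiff_one_iff_fderiv, h3]
    refine ⟨by rw [h1]; exact fun z => (h2 z).differentiableAt, ?_⟩
    exact continuous_dilationIntegral hc2 hw δ
  · have happ : ∀ a b, fderiv ℝ (fderiv ℝ (FreeWave.dilationAverage V δ)) z a b =
        ∫ s in (0 : ℝ)..1, (exp (δ * s) * exp (δ * s)) *
          fderiv ℝ (fderiv ℝ V) (exp (δ * s) • z) a b := fun a b => by
      let T : (Space d × ℝ →L[ℝ] Space d × ℝ →L[ℝ] ℝ) →L[ℝ] ℝ :=
        (ContinuousLinearMap.apply ℝ ℝ b).comp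
          (ContinuousLinearMap.apply ℝ (Space d × ℝ →L[ℝ] ℝ) a)
      rw [h3]
      exact map_dilationIntegral (E := Space d × ℝ →L[ℝ] Space d × ℝ →L[ℝ] ℝ) hc2 hw δ T z
    simp only [happ, hV.wave_eq]
    rw [← intervalIntegral.integral_finsetSum fun i _ =>
      Continuous.intervalIntegrable (by fun_prop) _ _]
    simp only [Finset.mul_sum]

lemma IsFreeWave.scalingDeriv_dilationAverage (hV : IsFreeWave V) {δ : ℝ} (hδ : δ ≠ 0) :
    scalingDeriv (FreeWave.dilationAverage V δ) = δ⁻¹ • (FreeWave.dilate V δ - V) := by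
  funext z
  have hc := hV.continuous_fderiv
  have hd : ∀ s : ℝ, HasDerivAt (fun s => V (exp (δ * s) • z))
      (δ * (fderiv ℝ V (exp (δ * s) • z) (exp (δ * s) • z))) s := fun s => by
    have h1 : HasDerivAt (fun s => exp (δ * s) • z) ((exp (δ * s) * δ) • z) s := by
      have := ((hasDerivAt_id s).const_mul δ).exp.smul_const z
      simpa using this
    have := (hV.differentiable (exp (δ * s) • z)).hasFDerivAt.comp_hasDerivAt s h1
    refine this.congr_deriv ?_
    rw [mul_comm (exp (δ * s)), mul_smul, map_smul, smul_eq_mul]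
  have hftc := intervalIntegral.integral_eq_sub_of_hasDerivAt (a := 0) (b := 1)
    (fun s _ => hd s) (Continuous.intervalIntegrable (by fun_prop) _ _)
  rw [scalingDeriv, (hV.hasFDerivAt_dilationAverage δ z).fderiv,
    ContinuousLinearMap.intervalIntegral_apply (Continuous.intervalIntegrable (by fun_prop) _ _)]
  rw [intervalIntegral.integral_const_mul] at hftc
  simp only [smul_apply, map_smul, mul_one, mul_zero, exp_zero, one_smul] at hftc ⊢
  simp only [Pi.smul_apply, Pi.sub_apply, FreeWave.dilate, ← hftc, smul_eq_mul]
  rw [inv_mul_cancel_left₀ hδ]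

end

section
variable {V : Space d × ℝ → ℝ}

lemma lintegral_comp_smul_le {g : Space d → ℝ≥0∞} (hg : Measurable g) {c : ℝ} (hc : 1 ≤ c) :
    ∫⁻ x, g (c • x) ≤ ∫⁻ x, g x := by
  rw [← lintegral_map hg (measurable_const_smul c),
    Measure.map_addHaar_smul _ (one_pos.trans_le hc).ne', lintegral_smul_measure]
  refine mul_le_of_le_one_left' ?_
  rw [ENNReal.ofReal_le_one, abs_of_nonneg (by positivity)]
  exact inv_le_one_of_one_le₀ (one_le_pow₀ hc)

lemma measurable_covectorEnergy {F : Space d → Space d × ℝ →L[ℝ] ℝ} (hF : Continuous F) :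
    Measurable fun x => ENNReal.ofReal (covectorEnergy (F x)) :=
  (ENNReal.continuous_ofReal.comp (continuous_covectorEnergy.comp hF)).measurable

lemma mass_dilate_le (hV : Continuous V) {σ : ℝ} (hσ : 0 ≤ σ) (t : ℝ) :
    mass (dilate V σ) t ≤ mass V (exp σ * t) :=
  lintegral_comp_smul_le (g := fun x => ENNReal.ofReal (V (x, exp σ * t) ^ 2))
    (ENNReal.continuous_ofReal.comp ((hV.comp (by fun_prop)).pow 2)).measurable (one_le_exp hσ)

lemma ofReal_covectorEnergy_smul (c : ℝ) (ℓ : Space d × ℝ →L[ℝ] ℝ) :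
    ENNReal.ofReal (covectorEnergy (c • ℓ)) =
      ENNReal.ofReal (c ^ 2) * ENNReal.ofReal (covectorEnergy ℓ) := by
  rw [covectorEnergy_smul, ENNReal.ofReal_mul (sq_nonneg c)]

lemma ofReal_sq_exp_le {σ : ℝ} (hσ : σ ≤ 1) : ENNReal.ofReal (exp σ ^ 2) ≤ 9 := by
  rw [← ENNReal.ofReal_ofNat 9]
  refine ENNReal.ofReal_le_ofReal ?_
  have h1 : exp σ ≤ exp 1 := exp_le_exp.2 hσ
  nlinarith [exp_one_lt_d9, exp_pos σ]

lemma IsFreeWave.energy_dilate_le (hV : IsFreeWave V) {σ : ℝ} (hσ : 0 ≤ σ) (hσ1 : σ ≤ 1) (t : ℝ) :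
    energy (FreeWave.dilate V σ) t ≤ 9 * energy V (exp σ * t) := by
  have hc : Continuous fun x => fderiv ℝ V (x, exp σ * t) :=
    hV.continuous_fderiv.comp (by fun_prop)
  unfold energy
  simp only [fderiv_dilate, ofReal_covectorEnergy_smul]
  rw [lintegral_const_mul' _ _ ENNReal.ofReal_ne_top]
  exact mul_le_mul' (ofReal_sq_exp_le hσ1)
    (lintegral_comp_smul_le (measurable_covectorEnergy hc) (one_le_exp hσ))

lemma mass_dilationAverage_le (hV : Continuous V) {δ : ℝ} (hδ : 0 ≤ δ) {B : ℝ≥0∞}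
    (hB : ∀ t, mass V t ≤ B) (t : ℝ) : mass (dilationAverage V δ) t ≤ B := by
  refine lintegral_convex_average_le (even_two.convexOn_pow (𝕜 := ℝ)) (continuous_pow 2)
    (F := fun x s => V (exp (δ * s) • (x, t))) ?_ fun s hs => ?_
  · exact hV.comp (by fun_prop)
  · exact (mass_dilate_le hV (mul_nonneg hδ hs.1.le) t).trans (hB _)

lemma IsFreeWave.continuous_fderiv_dilate (hV : IsFreeWave V) (δ t : ℝ) :
    Continuous (Function.uncurry fun (x : Space d) (s : ℝ) =>
      fderiv ℝ (FreeWave.dilate V (δ * s)) (x, t)) := by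
  have := hV.continuous_fderiv
  simp only [fderiv_dilate, Function.uncurry_def]
  fun_prop

lemma IsFreeWave.energy_dilationAverage_le (hV : IsFreeWave V) {δ : ℝ} (hδ : 0 ≤ δ) (hδ1 : δ ≤ 1)
    {B : ℝ≥0∞} (hB : ∀ t, energy V t ≤ B) (t : ℝ) :
    energy (FreeWave.dilationAverage V δ) t ≤ 9 * B := by
  unfold energy
  simp only [hV.fderiv_dilationAverage]
  refine lintegral_convex_average_le convexOn_covectorEnergy continuous_covectorEnergy
    (hV.continuous_fderiv_dilate δ t) fun s hs => ?_
  exact (hV.energy_dilate_le (mul_nonneg hδ hs.1.le) (mul_le_one₀ hδ1 hs.1.le hs.2) t).trans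
    (mul_le_mul' le_rfl (hB _))

lemma IsFreeWave.energy_sub_dilationAverage_le (hV : IsFreeWave V) {δ t : ℝ} (hδ : 0 ≤ δ)
    {ε : ℝ≥0∞} (hε : ∀ σ ∈ Set.Icc 0 δ, energy (V - FreeWave.dilate V σ) t ≤ ε) :
    energy (V - FreeWave.dilationAverage V δ) t ≤ ε := by
  have hc := hV.continuous_fderiv_dilate δ t
  have h : ∀ x, fderiv ℝ (V - FreeWave.dilationAverage V δ) (x, t) =
      ∫ s in (0 : ℝ)..1, (fderiv ℝ V (x, t) - fderiv ℝ (FreeWave.dilate V (δ * s)) (x, t)) :=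
    fun x => by
    have hcx : Continuous fun s : ℝ => fderiv ℝ (FreeWave.dilate V (δ * s)) (x, t) :=
      hc.comp (by fun_prop : Continuous fun s : ℝ => (x, s))
    rw [hV.fderiv_sub (hV.dilationAverage δ), Pi.sub_apply, hV.fderiv_dilationAverage,
      intervalIntegral.integral_sub (continuous_const.intervalIntegrable _ _)
        (hcx.intervalIntegrable _ _)]
    simp
  unfold energy
  simp only [h]
  refine lintegral_convex_average_le convexOn_covectorEnergy continuous_covectorEnergy
    ?_ fun s hs => ?_
  · exact (hV.continuous_fderiv.comp (by fun_prop)).sub hc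
  · have := hε (δ * s) ⟨mul_nonneg hδ hs.1.le, mul_le_of_le_one_right hδ hs.2⟩
    simpa only [energy, hV.fderiv_sub (hV.dilate _), Pi.sub_apply] using this

lemma ofReal_covectorEnergy_sub_le (ℓ m : Space d × ℝ →L[ℝ] ℝ) :
    ENNReal.ofReal (covectorEnergy (ℓ - m)) ≤
      2 * ENNReal.ofReal (covectorEnergy ℓ) + 2 * ENNReal.ofReal (covectorEnergy m) := by
  have h := covectorEnergy_add_le_two ℓ ((-1 : ℝ) • m)
  have h1 := covectorEnergy_nonneg ℓ
  have h2 := covectorEnergy_nonneg m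
  have h3 : ℓ + (-1 : ℝ) • m = ℓ - m :=
    ContinuousLinearMap.ext fun z => by simp [sub_eq_add_neg]
  rw [covectorEnergy_smul, h3] at h
  rw [two_mul_ofReal, two_mul_ofReal, ← ENNReal.ofReal_add (by positivity) (by positivity)]
  exact ENNReal.ofReal_le_ofReal (by linarith)

lemma eventually_setLIntegral_ball_le {f : ℝ → Space d → ℝ}
    (hf : Continuous (Function.uncurry f)) (h0 : ∀ σ x, 0 ≤ f σ x) (hz : ∀ x, f 0 x = 0) (R : ℝ)
    {ε : ℝ≥0∞} (hε : 0 < ε) :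
    ∀ᶠ σ in nhds (0 : ℝ), ∫⁻ x in Metric.ball 0 R, ENNReal.ofReal (f σ x) ≤ ε := by
  have htend := (ENNReal.continuous_ofReal.comp
    (continuous_parametric_integral_of_continuous (μ := volume) hf
      (isCompact_closedBall (0 : Space d) R))).tendsto 0
  simp only [Function.comp_apply, hz, integral_zero, ENNReal.ofReal_zero] at htend
  filter_upwards [ENNReal.tendsto_nhds_zero.1 htend ε hε] with σ hσ
  refine (lintegral_mono_set Metric.ball_subset_closedBall).trans ?_
  have hσc : Continuous (f σ) := hf.comp (by fun_prop : Continuous fun x : Space d => (σ, x))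
  rwa [Function.comp_apply, ofReal_integral_eq_lintegral_ofReal
    (hσc.continuousOn.integrableOn_compact (isCompact_closedBall _ _))
    (Eventually.of_forall (h0 σ))] at hσ

/-- Dilations act continuously in the energy norm. -/
lemma IsFreeWave.exists_energy_sub_dilate_le (hV : IsFreeWave V) (hfin : energy V 0 ≠ ∞)
    {ε : ℝ≥0∞} (hε : ε ≠ 0) :
    ∃ δ, 0 < δ ∧ δ ≤ 1 ∧ ∀ σ ∈ Set.Icc 0 δ, energy (V - FreeWave.dilate V σ) 0 ≤ ε := by
  have hFc : Continuous fun x => fderiv ℝ V (x, 0) := hV.continuous_fderiv.comp (by fun_prop)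
  obtain ⟨R, -, hR⟩ := exists_setLIntegral_compl_ball_le hfin
    (ENNReal.div_ne_zero.2 ⟨hε, (by norm_num : (40 : ℝ≥0∞) ≠ ∞)⟩)
  set F : Space d → Space d × ℝ →L[ℝ] ℝ := fun x => fderiv ℝ V (x, 0) with hF
  have hdens : ∀ σ x, fderiv ℝ (V - FreeWave.dilate V σ) (x, 0) = F x - exp σ • F (exp σ • x) :=
    fun σ x => by
    rw [hV.fderiv_sub (hV.dilate σ), Pi.sub_apply, fderiv_dilate, Prod.smul_mk, smul_zero]
  have hjoint : Continuous (Function.uncurry fun (σ : ℝ) (x : Space d) =>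
      covectorEnergy (F x - exp σ • F (exp σ • x))) :=
    continuous_covectorEnergy.comp (by fun_prop)
  have hin : ∀ᶠ σ in nhds (0 : ℝ), ∫⁻ x in Metric.ball 0 R,
      ENNReal.ofReal (covectorEnergy (F x - exp σ • F (exp σ • x))) ≤ ε / 2 :=
    eventually_setLIntegral_ball_le hjoint (fun _ _ => covectorEnergy_nonneg _)
      (fun x => by simp [covectorEnergy]) R (ENNReal.half_pos hε)
  obtain ⟨r, hr, hball⟩ := Metric.eventually_nhds_iff.1 hin
  refine ⟨min 1 (r / 2), by positivity, min_le_left _ _, fun σ hσ => ?_⟩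
  have hσ1 : σ ≤ 1 := hσ.2.trans (min_le_left _ _)
  have hσr : σ ≤ r / 2 := hσ.2.trans (min_le_right _ _)
  have hout : ∫⁻ x in (Metric.ball 0 R)ᶜ,
      ENNReal.ofReal (covectorEnergy (F x - exp σ • F (exp σ • x))) ≤ ε / 2 := by
    set e : Space d → ℝ≥0∞ := fun x => ENNReal.ofReal (covectorEnergy (F x))
    have hm : Measurable e := measurable_covectorEnergy hFc
    have hms : MeasurableSet (Metric.ball (0 : Space d) R)ᶜ :=
      Metric.isOpen_ball.measurableSet.compl
    have hscale : ∫⁻ x in (Metric.ball 0 R)ᶜ, e (exp σ • x) ≤ ε / 40 := by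
      rw [← lintegral_indicator hms]
      refine le_trans (lintegral_mono fun x => ?_) ((lintegral_comp_smul_le
        (hm.indicator hms) (one_le_exp hσ.1)).trans_eq (lintegral_indicator hms _) |>.trans hR)
      by_cases hx : x ∈ (Metric.ball (0 : Space d) R)ᶜ
      · have hx' : exp σ • x ∈ (Metric.ball (0 : Space d) R)ᶜ := by
          simp only [Set.mem_compl_iff, mem_ball_zero_iff, not_lt] at hx ⊢
          rw [norm_smul, norm_of_nonneg (exp_pos σ).le]
          exact hx.trans (le_mul_of_one_le_left (norm_nonneg _) (one_le_exp hσ.1))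
        rw [Set.indicator_of_mem hx, Set.indicator_of_mem hx']
      · rw [Set.indicator_of_notMem hx]
        exact zero_le
    calc
      _ ≤ ∫⁻ x in (Metric.ball 0 R)ᶜ, (2 * e x + 2 * (9 * e (exp σ • x))) := by
        refine lintegral_mono fun x => (ofReal_covectorEnergy_sub_le _ _).trans ?_
        rw [ofReal_covectorEnergy_smul]
        gcongr
        exact ofReal_sq_exp_le hσ1
      _ = 2 * (∫⁻ x in (Metric.ball 0 R)ᶜ, e x) +
          2 * (9 * ∫⁻ x in (Metric.ball 0 R)ᶜ, e (exp σ • x)) := by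
        rw [lintegral_add_left (hm.const_mul 2), lintegral_const_mul' _ _ ENNReal.ofNat_ne_top,
          lintegral_const_mul' _ _ ENNReal.ofNat_ne_top,
          lintegral_const_mul' _ _ ENNReal.ofNat_ne_top]
      _ ≤ 2 * (ε / 40) + 2 * (9 * (ε / 40)) := by gcongr
      _ = ε / 2 := by
        rw [← mul_assoc, ← add_mul, ENNReal.div_eq_inv_mul, ENNReal.div_eq_inv_mul, ← mul_assoc]
        congr 1
        rw [← ENNReal.toReal_eq_toReal_iff' (by finiteness) (by finiteness)]
        norm_num
  have := add_le_add (hball (y := σ) (by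
    rw [dist_zero_right, norm_of_nonneg hσ.1]; linarith)) hout
  rw [lintegral_add_compl _ Metric.isOpen_ball.measurableSet, ENNReal.add_halves] at this
  simpa only [energy, hdens] using this

end

/-! ### Removing low frequencies by averaging translates -/

section
variable {U V M : Space d × ℝ → ℝ}

/-- The spatial translate `z ↦ M (z + (a, 0))`. -/
noncomputable def translate (M : Space d × ℝ → ℝ) (a : Space d) (z : Space d × ℝ) : ℝ :=
  M (z + (a, 0))

lemma IsFreeWave.translate (hM : IsFreeWave M) (a : Space d) : IsFreeWave (translate M a) :=
  hM.comp_add_right (a, 0)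

lemma energy_translate (M : Space d × ℝ → ℝ) (a : Space d) (t : ℝ) :
    energy (translate M a) t = energy M t :=
  energy_comp_add_right M a t

lemma sq_apply_le_covectorEnergy (ℓ : Space d × ℝ →L[ℝ] ℝ) (a : Space d) :
    ℓ (a, 0) ^ 2 ≤ ‖a‖ ^ 2 * covectorEnergy ℓ := by
  refine (sq_apply_space_le ℓ a).trans ?_
  rw [covectorEnergy_eq_sum]
  gcongr
  exact le_add_of_nonneg_right (sq_nonneg _)

lemma IsFreeWave.mass_sub_translate_le (hM : IsFreeWave M) (a : Space d) (t : ℝ) :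
    mass (M - FreeWave.translate M a) t ≤ ENNReal.ofReal (‖a‖ ^ 2) * energy M t := by
  have hc := hM.continuous_fderiv
  have hFc : Continuous (Function.uncurry fun (x : Space d) (s : ℝ) =>
      fderiv ℝ M (x + s • a, t) (a, 0)) := by
    simp only [Function.uncurry_def]
    fun_prop
  have hftc : ∀ x, FreeWave.translate M a (x, t) - M (x, t) =
      ∫ s in (0 : ℝ)..1, fderiv ℝ M (x + s • a, t) (a, 0) := fun x => by
    have hd : ∀ s : ℝ, HasDerivAt (fun s : ℝ => M (x + s • a, t))
        (fderiv ℝ M (x + s • a, t) (a, 0)) s := fun s => by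
      have h1 : HasDerivAt (fun s : ℝ => (x + s • a, t)) (a, 0) s := by
        simpa using (((hasDerivAt_id s).smul_const a).const_add x).prodMk (hasDerivAt_const s t)
      exact (hM.differentiable (x + s • a, t)).hasFDerivAt.comp_hasDerivAt s h1
    have h := intervalIntegral.integral_eq_sub_of_hasDerivAt (a := 0) (b := 1) (fun s _ => hd s)
      (Continuous.intervalIntegrable (by fun_prop) _ _)
    rw [h]
    simp [FreeWave.translate]
  have hsq : ∀ x, (M - FreeWave.translate M a) (x, t) ^ 2 =
      (∫ s in (0 : ℝ)..1, fderiv ℝ M (x + s • a, t) (a, 0)) ^ 2 := fun x => by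
    rw [← hftc, Pi.sub_apply]; ring
  unfold mass
  simp only [hsq]
  refine lintegral_convex_average_le (even_two.convexOn_pow (𝕜 := ℝ)) (continuous_pow 2) hFc
    fun s _ => ?_
  calc
    _ ≤ ∫⁻ x, ENNReal.ofReal (‖a‖ ^ 2) *
        ENNReal.ofReal (covectorEnergy (fderiv ℝ M (x + s • a, t))) := by
      refine lintegral_mono fun x => ?_
      rw [← ENNReal.ofReal_mul (by positivity)]
      exact ENNReal.ofReal_le_ofReal (sq_apply_le_covectorEnergy _ _)
    _ = _ := by
      rw [lintegral_const_mul' _ _ ENNReal.ofReal_ne_top, energy, lintegral_add_right_eq_self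
        (fun x => ENNReal.ofReal (covectorEnergy (fderiv ℝ M (x, t)))) (s • a)]

lemma covectorEnergy_midpoint_le (ℓ m : Space d × ℝ →L[ℝ] ℝ) :
    covectorEnergy ((1 / 2 : ℝ) • (ℓ + m)) ≤
      5 / 16 * covectorEnergy ℓ + 5 / 4 * covectorEnergy m := by
  have h := covectorEnergy_add_le (κ := 1 / 4) (by norm_num) ℓ m
  rw [covectorEnergy_smul]
  norm_num at h ⊢
  linarith

lemma ofReal_covectorEnergy_midpoint_le (ℓ m : Space d × ℝ →L[ℝ] ℝ) :
    ENNReal.ofReal (covectorEnergy ((1 / 2 : ℝ) • (ℓ + m))) ≤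
      ENNReal.ofReal (5 / 16) * ENNReal.ofReal (covectorEnergy ℓ) +
        ENNReal.ofReal (5 / 4) * ENNReal.ofReal (covectorEnergy m) := by
  have h1 := covectorEnergy_nonneg ℓ
  have h2 := covectorEnergy_nonneg m
  rw [← ENNReal.ofReal_mul (by norm_num), ← ENNReal.ofReal_mul (by norm_num),
    ← ENNReal.ofReal_add (by positivity) (by positivity)]
  exact ENNReal.ofReal_le_ofReal (covectorEnergy_midpoint_le ℓ m)

/-- Averaging a wave with a far translate reduces its energy. -/
lemma IsFreeWave.exists_energy_midpoint_translate_le (hM : IsFreeWave M) (hd : 0 < d)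
    (hfin : energy M 0 ≠ ∞) :
    ∃ a, energy ((1 / 2 : ℝ) • (M + FreeWave.translate M a)) 0 ≤
      ENNReal.ofReal (3 / 4) * energy M 0 := by
  by_cases hA : energy M 0 = 0
  · refine ⟨0, ?_⟩
    have h := energy_add_le hM (hM.translate 0) 0
    rw [energy_translate, hA] at h
    rw [energy_const_smul, le_zero_iff.1 (h.trans_eq (by simp)), mul_zero]
    exact zero_le
  obtain ⟨R, hR0, hR⟩ := exists_setLIntegral_compl_ball_le hfin
    (ENNReal.div_ne_zero.2 ⟨hA, (by norm_num : (20 : ℝ≥0∞) ≠ ∞)⟩)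
  set a : Space d := EuclideanSpace.single ⟨0, hd⟩ (2 * R)
  have ha : ‖a‖ = 2 * R := by
    rw [PiLp.norm_single, norm_of_nonneg (by positivity)]
  set T := (Metric.ball (0 : Space d) R)ᶜ
  have hT : MeasurableSet T := Metric.isOpen_ball.measurableSet.compl
  have hxT : ∀ x, x ∈ T ∨ x + a ∈ T := fun x => by
    by_contra! h
    simp only [T, Set.mem_compl_iff, mem_ball_zero_iff, not_not] at h
    have := norm_sub_le (x + a) x
    rw [add_sub_cancel_left] at this
    linarith
  set e : Space d → ℝ≥0∞ := fun x => ENNReal.ofReal (covectorEnergy (fderiv ℝ M (x, 0))) with he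
  have hm : Measurable e := measurable_covectorEnergy (hM.continuous_fderiv.comp (by fun_prop))
  set τ := T.indicator e
  have hmτ : Measurable τ := hm.indicator hT
  have hdens : ∀ x, fderiv ℝ ((1 / 2 : ℝ) • (M + FreeWave.translate M a)) (x, 0) =
      (1 / 2 : ℝ) • (fderiv ℝ M (x, 0) + fderiv ℝ M (x + a, 0)) := fun x => by
    have h : fderiv ℝ (FreeWave.translate M a) (x, 0) = fderiv ℝ M ((x, 0) + (a, 0)) :=
      fderiv_comp_add_right _
    rw [fderiv_const_smul_fun, hM.fderiv_add (hM.translate a), Pi.smul_apply, Pi.add_apply, h,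
      Prod.mk_add_mk, add_zero]
  have hpt : ∀ x, ENNReal.ofReal (covectorEnergy
        (fderiv ℝ ((1 / 2 : ℝ) • (M + FreeWave.translate M a)) (x, 0))) ≤
      ENNReal.ofReal (5 / 16) * (e x + e (x + a)) +
        ENNReal.ofReal (5 / 4) * (τ x + τ (x + a)) := fun x => by
    rw [hdens]
    rcases hxT x with hx | hx
    · rw [add_comm (fderiv ℝ M (x, 0))]
      refine (ofReal_covectorEnergy_midpoint_le _ _).trans ?_
      have hτ : τ x = e x := Set.indicator_of_mem hx _
      rw [hτ]
      gcongr
      · exact le_add_self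
      · exact le_self_add
    · refine (ofReal_covectorEnergy_midpoint_le _ _).trans ?_
      have hτ : τ (x + a) = e (x + a) := Set.indicator_of_mem hx _
      rw [hτ]
      gcongr
      · exact le_self_add
      · exact le_add_self
  refine ⟨a, (lintegral_mono hpt).trans ?_⟩
  have hτi : ∫⁻ x, τ x ≤ energy M 0 / 20 := (lintegral_indicator hT e).trans_le hR
  have hme : Measurable fun x => e x + e (x + a) := hm.add (hm.comp (measurable_add_const a))
  rw [lintegral_add_left (hme.const_mul _),
    lintegral_const_mul' _ _ ENNReal.ofReal_ne_top,
    lintegral_const_mul' _ _ ENNReal.ofReal_ne_top, lintegral_add_left hm, lintegral_add_left hmτ,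
    lintegral_add_right_eq_self e a, lintegral_add_right_eq_self τ a]
  calc
    _ ≤ ENNReal.ofReal (5 / 16) * (energy M 0 + energy M 0) +
        ENNReal.ofReal (5 / 4) * (energy M 0 / 20 + energy M 0 / 20) := by
      gcongr
      all_goals exact le_rfl
    _ = ENNReal.ofReal (3 / 4) * energy M 0 := by
      have h20 : energy M 0 / 20 = ENNReal.ofReal (1 / 20) * energy M 0 := by
        rw [ENNReal.div_eq_inv_mul, one_div, ENNReal.ofReal_inv_of_pos (by norm_num),
          ENNReal.ofReal_ofNat]
      rw [h20, ← two_mul, ← two_mul, ← mul_assoc, ← mul_assoc, ← mul_assoc, ← add_mul]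
      congr 1
      rw [← ENNReal.toReal_eq_toReal_iff' (by finiteness) (by finiteness), ENNReal.toReal_add
        (by finiteness) (by finiteness)]
      simp only [ENNReal.toReal_mul, ENNReal.toReal_ofNat]
      repeat rw [ENNReal.toReal_ofReal (by norm_num)]
      norm_num

/-- A finite energy wave is square integrable, uniformly in time, up to a wave of small energy. -/
lemma IsFreeWave.exists_mass_sub_le (hU : IsFreeWave U) (hd : 0 < d) {B : ℝ≥0}
    (hB : ∀ t, energy U t ≤ B) (n : ℕ) :
    ∃ M, IsFreeWave M ∧ (∀ t, energy M t ≤ B) ∧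
      energy M 0 ≤ ENNReal.ofReal (3 / 4) ^ n * energy U 0 ∧
        ∃ C : ℝ≥0, ∀ t, mass (U - M) t ≤ C := by
  induction n with
  | zero => exact ⟨U, hU, hB, by simp, 0, fun t => by simp [mass]⟩
  | succ n ih =>
    obtain ⟨M, hM, hMB, hM0, C, hC⟩ := ih
    obtain ⟨a, ha⟩ := hM.exists_energy_midpoint_translate_le hd
      ((hMB 0).trans_lt ENNReal.coe_lt_top).ne
    refine ⟨_, (hM.add (hM.translate a)).const_smul (1 / 2), fun t => ?_, ?_,
      2 * C + 2 * ((‖a‖₊ ^ 2) * B), fun t => ?_⟩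
    · rw [energy_const_smul]
      have h := energy_add_le hM (hM.translate a) t
      rw [energy_translate] at h
      refine (mul_le_mul' le_rfl (h.trans (add_le_add (mul_le_mul' le_rfl (hMB t))
        (mul_le_mul' le_rfl (hMB t))))).trans_eq ?_
      rw [← add_mul, ← mul_assoc, show (2 + 2 : ℝ≥0∞) = ENNReal.ofReal 4 by norm_num,
        ← ENNReal.ofReal_mul (by positivity)]
      norm_num
    · refine ha.trans ((mul_le_mul' le_rfl hM0).trans_eq ?_)
      rw [pow_succ', mul_assoc]
    · have hsplit : U - (1 / 2 : ℝ) • (M + FreeWave.translate M a) =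
          (U - M) + (1 / 2 : ℝ) • (M - FreeWave.translate M a) := by
        funext z
        simp only [Pi.sub_apply, Pi.add_apply, Pi.smul_apply, smul_eq_mul]
        ring
      rw [hsplit]
      refine (mass_add_le (hU.sub hM).contDiff.continuous _ t).trans ?_
      rw [mass_const_smul]
      push_cast
      have h1 : ENNReal.ofReal ((1 / 2) ^ 2) ≤ 1 := ENNReal.ofReal_le_one.2 (by norm_num)
      have h2 := (hM.mass_sub_translate_le a t).trans (mul_le_mul' le_rfl (hMB t))
      have h3 : ENNReal.ofReal (‖a‖ ^ 2) = (‖a‖₊ : ℝ≥0∞) ^ 2 := by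
        rw [ENNReal.ofReal_pow (norm_nonneg _), ofReal_norm]; rfl
      rw [h3] at h2
      exact add_le_add (mul_le_mul' le_rfl (hC t))
        (mul_le_mul' le_rfl ((mul_le_mul' h1 h2).trans_eq (one_mul _)))

end

/-! ### Vanishing of the interior energy -/

section
variable {U : Space d × ℝ → ℝ}

/-- Waves of bounded energy are approximated in energy, uniformly in time, by waves whose
interior energy decays like `1 / η`. -/
lemma IsFreeWave.exists_approx (hU : IsFreeWave U) (hd : 0 < d) {B : ℝ≥0}
    (hB : ∀ t, energy U t ≤ B) {ε : ℝ≥0∞} (hε : ε ≠ 0) :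
    ∃ V, IsFreeWave V ∧ (∀ t, energy (U - V) t ≤ 2 * ε + 2 * ε) ∧ ∃ C : ℝ≥0∞, C ≠ ∞ ∧
      ∀ t, mass V t ≤ C ∧ energy V t ≤ C ∧ mass (scalingDeriv V) t ≤ C ∧
        energy (scalingDeriv V) t ≤ C := by
  have hU0 : energy U 0 ≠ ∞ := ((hB 0).trans_lt ENNReal.coe_lt_top).ne
  have hpow : Tendsto (fun n : ℕ => ENNReal.ofReal (3 / 4) ^ n * energy U 0) atTop (nhds 0) := by
    have h := ENNReal.Tendsto.mul_const (b := energy U 0)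
      (ENNReal.tendsto_pow_atTop_nhds_zero_of_lt_one
        (ENNReal.ofReal_lt_one.2 (by norm_num : (3 / 4 : ℝ) < 1))) (Or.inr hU0)
    rwa [zero_mul] at h
  obtain ⟨n, hn⟩ := (ENNReal.tendsto_nhds_zero.1 hpow ε (pos_iff_ne_zero.2 hε)).exists
  obtain ⟨M, hM, hMB, hM0, C, hC⟩ := hU.exists_mass_sub_le hd hB n
  set W := U - M
  have hW : IsFreeWave W := hU.sub hM
  have hWB : ∀ t, energy W t ≤ (2 * B + 2 * B : ℝ≥0) := fun t => by
    push_cast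
    exact (energy_sub_le hU hM t).trans
      (add_le_add (mul_le_mul' le_rfl (hMB t)) (mul_le_mul' le_rfl (hB t)))
  set b : ℝ≥0 := 2 * B + 2 * B
  obtain ⟨δ, hδ, hδ1, hδε⟩ := hW.exists_energy_sub_dilate_le
    ((hWB 0).trans_lt ENNReal.coe_lt_top).ne hε
  have hV : IsFreeWave (FreeWave.dilationAverage W δ) := hW.dilationAverage δ
  have hVB := hW.energy_dilationAverage_le hδ.le hδ1 hWB
  have hrB : ∀ t, energy (W - FreeWave.dilationAverage W δ) t ≤ (2 * (9 * b) + 2 * b : ℝ≥0) :=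
      fun t => by
    push_cast
    exact (energy_sub_le hW hV t).trans
      (add_le_add (mul_le_mul' le_rfl (hVB t)) (mul_le_mul' le_rfl (hWB t)))
  have hr : ∀ t, energy (W - FreeWave.dilationAverage W δ) t ≤ ε := fun t =>
    ((hW.sub hV).energy_le_energy_zero hrB t).trans
      (hW.energy_sub_dilationAverage_le hδ.le hδε)
  refine ⟨FreeWave.dilationAverage W δ, hV, fun t => ?_, (C + 9 * b) +
    (ENNReal.ofReal (δ⁻¹ ^ 2) * (2 * C + 2 * C) +
      ENNReal.ofReal (δ⁻¹ ^ 2) * (2 * b + 2 * (9 * b))), by finiteness,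
    fun t => ⟨?_, ?_, ?_, ?_⟩⟩
  · have hsplit : U - FreeWave.dilationAverage W δ = M + (W - FreeWave.dilationAverage W δ) := by
      simp only [W]; abel
    rw [hsplit]
    exact (energy_add_le hM (hW.sub hV) t).trans (add_le_add (mul_le_mul' le_rfl (hr t))
      (mul_le_mul' le_rfl ((hM.energy_le_energy_zero hMB t).trans (hM0.trans hn))))
  · exact ((mass_dilationAverage_le hW.contDiff.continuous hδ.le hC t).trans le_self_add).trans
      le_self_add
  · exact ((hVB t).trans le_add_self).trans le_self_add
  · rw [hW.scalingDeriv_dilationAverage hδ.ne', mass_const_smul]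
    refine le_trans (mul_le_mul' le_rfl ?_) (le_self_add.trans le_add_self)
    exact (mass_sub_le (hW.dilate δ).contDiff.continuous _ t).trans (add_le_add
      (mul_le_mul' le_rfl ((mass_dilate_le hW.contDiff.continuous hδ.le t).trans (hC _)))
      (mul_le_mul' le_rfl (hC t)))
  · rw [hW.scalingDeriv_dilationAverage hδ.ne', energy_const_smul]
    refine le_trans (mul_le_mul' le_rfl ?_) (le_add_self.trans le_add_self)
    exact (energy_sub_le (hW.dilate δ) hW t).trans (add_le_add (mul_le_mul' le_rfl (hWB t))
      (mul_le_mul' le_rfl ((hW.energy_dilate_le hδ.le hδ1 t).trans (mul_le_mul' le_rfl (hWB _)))))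

theorem IsFreeWave.tendsto_interior_energy (hU : IsFreeWave U) (hd : 0 < d) {B : ℝ≥0}
    (hB : ∀ t, energy U t ≤ B) :
    Tendsto (fun η : ℝ => ⨆ (t : ℝ) (_ : η < t), ∫⁻ x in Metric.ball (0 : Space d) (t - η),
      ENNReal.ofReal (covectorEnergy (fderiv ℝ U (x, t)))) atTop (nhds 0) := by
  obtain ⟨K, hK⟩ := exists_interior_energy_le d
  refine ENNReal.tendsto_nhds_zero.2 fun ε hε => ?_
  obtain ⟨V, hV, hUV, C, hC, hVC⟩ := hU.exists_approx hd hB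
    (ENNReal.div_ne_zero.2 ⟨hε.ne', (by norm_num : (16 : ℝ≥0∞) ≠ ∞)⟩)
  have hdiv : Tendsto (fun η : ℝ => K * C / ENNReal.ofReal η) atTop (nhds 0) := by
    have h := ENNReal.Tendsto.const_div (a := K * C) ENNReal.tendsto_ofReal_atTop
      (Or.inr (by finiteness))
    rwa [ENNReal.div_top] at h
  filter_upwards [ENNReal.tendsto_nhds_zero.1 hdiv (ε / 4) (ENNReal.div_pos hε.ne' (by norm_num)),
    eventually_ge_atTop 1] with η hη h1
  refine iSup₂_le fun t ht => ?_
  obtain ⟨c1, c2, c3, c4⟩ := hVC t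
  have hη0 : ENNReal.ofReal η ≠ 0 := (ENNReal.ofReal_pos.2 (one_pos.trans_le h1)).ne'
  have hI := (ENNReal.le_div_iff_mul_le (Or.inl hη0) (Or.inl ENNReal.ofReal_ne_top)).2
    ((mul_comm _ _).trans_le (hK V hV η t C h1 ht c1 c2 c3 c4))
  calc
    _ ≤ 2 * (ε / 4) + 2 * (2 * (ε / 16) + 2 * (ε / 16)) :=
      (setLIntegral_energy_le hU hV _ t).trans (add_le_add (mul_le_mul' le_rfl (hI.trans hη))
        (mul_le_mul' le_rfl (hUV t)))
    _ = ε := by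
      simp only [ENNReal.div_eq_inv_mul, ← mul_assoc, ← add_mul]
      conv_rhs => rw [← one_mul ε]
      congr 1
      rw [← ENNReal.toReal_eq_toReal_iff' (by finiteness) (by finiteness), ENNReal.toReal_add
        (by finiteness) (by finiteness)]
      norm_num [ENNReal.toReal_add, ENNReal.inv_ne_top]

end

section
variable {u : Space d → ℝ → ℝ}

lemma covectorEnergy_fderiv_uncurry (hu : Differentiable ℝ (Function.uncurry u)) (x : Space d)
    (t : ℝ) : covectorEnergy (fderiv ℝ (Function.uncurry u) (x, t)) =
      ‖gradient (fun y => u y t) x‖ ^ 2 + deriv (u x) t ^ 2 := by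
  have h1 : fderiv ℝ (fun y => u y t) x = _ := (hasFDerivAt_slice hu x t).fderiv
  have h2 : deriv (u x) t = _ := (hasDerivAt_time hu x t).deriv
  rw [gradient, LinearIsometryEquiv.norm_map, h1, h2, covectorEnergy]

lemma isFreeWave_uncurry (hu : ContDiff ℝ 2 (Function.uncurry u))
    (hwave : ∀ x t, deriv (fun s => deriv (fun s' => u x s') s) t
      - ∑ i : Fin d, fderiv ℝ (fun y => fderiv ℝ (fun z => u z t) y (basisVec i)) x
          (basisVec i) = 0) : IsFreeWave (Function.uncurry u) where
  contDiff := hu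
  wave_eq := fun ⟨x, t⟩ => by
    have hd : Differentiable ℝ (Function.uncurry u) := hu.differentiable (by norm_num)
    have hd' : Differentiable ℝ (fderiv ℝ (Function.uncurry u)) :=
      (hu.fderiv_right (m := 1) (by norm_num)).differentiable (by norm_num)
    have h1 : ∀ y s, fderiv ℝ (fun z => u z s) y = _ := fun y s => (hasFDerivAt_slice hd y s).fderiv
    have h2 : ∀ y s, deriv (fun s' => u y s') s = _ := fun y s => (hasDerivAt_time hd y s).deriv
    have h := hwave x t
    simp only [h1, h2, ContinuousLinearMap.comp_apply, ContinuousLinearMap.inl_apply] at h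
    have h3 : deriv (fun s => fderiv ℝ (Function.uncurry u) (x, s) (0, 1)) t = _ :=
      (hasDerivAt_fderiv_time hd' x t (0, 1)).deriv
    have h4 : ∀ w, fderiv ℝ (fun y => fderiv ℝ (Function.uncurry u) (y, t) w) x = _ := fun w =>
      (hasFDerivAt_fderiv_slice hd' x t w).fderiv
    rw [h3] at h
    simp only [h4] at h
    exact sub_eq_zero.1 h

end

end FreeWave

/-- Asymptotically, all energy of a finite-energy free wave concentrates near and
outside the light cone: `sup_{t>η} ∫_{|x|<t-η} (|∇u|² + |u_t|²) dx → 0` as `η → +∞`. -/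
theorem free_wave_interior_energy_vanishes (d : ℕ) (hd : 3 ≤ d)
    (u : EuclideanSpace ℝ (Fin d) → ℝ → ℝ)
    (hu : ContDiff ℝ 2 (Function.uncurry u))
    (hwave : ∀ (x : EuclideanSpace ℝ (Fin d)) (t : ℝ),
      deriv (fun s => deriv (fun s' => u x s') s) t
        - ∑ i : Fin d, fderiv ℝ (fun y => fderiv ℝ (fun z => u z t) y
            (EuclideanSpace.single i 1)) x (EuclideanSpace.single i 1) = 0)
    (hfinite : ∀ t : ℝ, Integrable (fun x : EuclideanSpace ℝ (Fin d) =>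
      ‖gradient (fun y => u y t) x‖ ^ 2 + (deriv (u x) t) ^ 2))
    (hconserve : ∀ t : ℝ,
      (∫ x : EuclideanSpace ℝ (Fin d),
        (‖gradient (fun y => u y t) x‖ ^ 2 + (deriv (u x) t) ^ 2))
      = ∫ x : EuclideanSpace ℝ (Fin d),
        (‖gradient (fun y => u y 0) x‖ ^ 2 + (deriv (u x) 0) ^ 2)) :
    Tendsto (fun η : ℝ =>
        ⨆ (t : ℝ) (_ : η < t),
          ∫⁻ x in Metric.ball (0 : EuclideanSpace ℝ (Fin d)) (t - η),
            ENNReal.ofReal (‖gradient (fun y => u y t) x‖ ^ 2 + (deriv (u x) t) ^ 2))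
      atTop (nhds 0) := by
  have hU := FreeWave.isFreeWave_uncurry hu hwave
  have hB : ∀ t, FreeWave.energy (Function.uncurry u) t ≤
      Real.toNNReal (∫ x, (‖gradient (fun y => u y 0) x‖ ^ 2 + (deriv (u x) 0) ^ 2)) := fun t => by
    rw [← hconserve t]
    simp only [FreeWave.energy, FreeWave.covectorEnergy_fderiv_uncurry hU.differentiable]
    exact (ofReal_integral_eq_lintegral_ofReal (hfinite t)
      (Eventually.of_forall fun x => by positivity)).ge
  simpa only [FreeWave.covectorEnergy_fderiv_uncurry hU.differentiable] using
    hU.tendsto_interior_energy (by lia) hB
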